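/- arXiv:2201.12744 — 2 statements merged into one kernel-verified Lean document; each statement's English description precedes it below -/
import Mathlib

section
/- Assume f satisfies lim_{R→∞} f(R, R, …, R) = ∞. Suppose u ∈ USC ∩ L^∞([0,T) × cl(Ω)) is a viscosity subsolution and v ∈ LSC ∩ L^∞([0,T) × cl(Ω)) is a viscosity supersolution of F(Hw) = e^{∂_t w + G(t,z,w)} g(z) in Ω_T. Then sup_{Ω_T} (u − v) ≤ sup_{∂_P Ω_T} (u − v)₊, where ∂_P Ω_T = ({0} × cl(Ω)) ∪ ((0,T) × ∂Ω) and (·)₊ = max(·, 0). -/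
open Filter Topology Set

noncomputable section

/-- The `l`-th elementary symmetric polynomial of `x ∈ ℝⁿ`. -/
def esym (n l : ℕ) (x : Fin n → ℝ) : ℝ :=
  ∑ s ∈ Finset.powersetCard l (Finset.univ : Finset (Fin n)), ∏ i ∈ s, x i

/-- The cone `Γ_k = {x ∈ ℝⁿ : σ_l(x) > 0 for all 1 ≤ l ≤ k}`. -/
def GammaK (n k : ℕ) : Set (Fin n → ℝ) :=
  {x | ∀ l, 1 ≤ l → l ≤ k → 0 < esym n l x}

/-- `Γ ⊊ ℝⁿ` is an open, convex, symmetric cone with vertex `0` and `Γₙ ⊆ Γ ⊆ Γ₁`. -/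
def IsGammaCone (n : ℕ) (Γ : Set (Fin n → ℝ)) : Prop :=
  IsOpen Γ ∧ Convex ℝ Γ ∧ (∀ x ∈ Γ, ∀ t : ℝ, 0 < t → t • x ∈ Γ) ∧
    (∀ σ : Equiv.Perm (Fin n), ∀ x ∈ Γ, x ∘ σ ∈ Γ) ∧
    Γ ≠ Set.univ ∧ GammaK n n ⊆ Γ ∧ Γ ⊆ GammaK n 1

/-- `f : cl(Γ) → [0,∞)` symmetric, concave, strictly increasing in each variable,
vanishing on `∂Γ`. -/
def IsHessianDensity (n : ℕ) (Γ : Set (Fin n → ℝ)) (f : (Fin n → ℝ) → ℝ) : Prop :=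
  (∀ x ∈ closure Γ, 0 ≤ f x) ∧
    (∀ σ : Equiv.Perm (Fin n), ∀ x ∈ closure Γ, f (x ∘ σ) = f x) ∧
    ConcaveOn ℝ (closure Γ) f ∧
    (∀ x ∈ closure Γ, ∀ y ∈ closure Γ, (∀ i, x i ≤ y i) → x ≠ y → f x < f y) ∧
    (∀ x ∈ frontier Γ, f x = 0)

/-- The complex Hessian `(∂²u/∂z_j∂z̄_k)_{j,k}` of a real-valued function on `ℂⁿ`,
computed from the real second derivative. -/
def complexHessian {n : ℕ} (u : (Fin n → ℂ) → ℝ) (z : Fin n → ℂ) :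
    Matrix (Fin n) (Fin n) ℂ := fun j k =>
  (((iteratedFDeriv ℝ 2 u z ![Pi.single j 1, Pi.single k 1] +
        iteratedFDeriv ℝ 2 u z ![Pi.single j Complex.I, Pi.single k Complex.I]) / 4 : ℝ) : ℂ) +
    Complex.I *
      (((iteratedFDeriv ℝ 2 u z ![Pi.single j 1, Pi.single k Complex.I] -
          iteratedFDeriv ℝ 2 u z ![Pi.single j Complex.I, Pi.single k 1]) / 4 : ℝ) : ℂ)

open Classical in
/-- `F(H) = f(λ(H))` if `λ(H) ∈ cl(Γ)` and `F(H) = −∞` otherwise. -/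
def Fop {n : ℕ} (f : (Fin n → ℝ) → ℝ) (Γ : Set (Fin n → ℝ))
    (A : Matrix (Fin n) (Fin n) ℂ) : EReal :=
  if h : A.IsHermitian then
    if h.eigenvalues ∈ closure Γ then ((f h.eigenvalues : ℝ) : EReal) else ⊥
  else ⊥

/-- An upper test function (C¹ in t, C² in z near `p₀`) for `u` at `p₀`. -/
def IsUpperTestAt {n : ℕ} (u q : ℝ × (Fin n → ℂ) → ℝ) (p₀ : ℝ × (Fin n → ℂ)) : Prop :=
  q p₀ = u p₀ ∧ (∀ᶠ p in 𝓝 p₀, u p ≤ q p) ∧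
    ∀ᶠ p in 𝓝 p₀, DifferentiableAt ℝ (fun t => q (t, p.2)) p.1 ∧
      ContDiffAt ℝ 2 (fun z => q (p.1, z)) p.2

/-- A lower test function (C¹ in t, C² in z near `p₀`) for `v` at `p₀`. -/
def IsLowerTestAt {n : ℕ} (v q : ℝ × (Fin n → ℂ) → ℝ) (p₀ : ℝ × (Fin n → ℂ)) : Prop :=
  q p₀ = v p₀ ∧ (∀ᶠ p in 𝓝 p₀, q p ≤ v p) ∧
    ∀ᶠ p in 𝓝 p₀, DifferentiableAt ℝ (fun t => q (t, p.2)) p.1 ∧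
      ContDiffAt ℝ 2 (fun z => q (p.1, z)) p.2

/-- Viscosity subsolution of `F(Hw) = e^{∂ₜw + G(t,z,w)} g(z)` on `D`. -/
def ParSubsolOn {n : ℕ} (f : (Fin n → ℝ) → ℝ) (Γ : Set (Fin n → ℝ))
    (G : ℝ → (Fin n → ℂ) → ℝ → ℝ) (g : (Fin n → ℂ) → ℝ)
    (D : Set (ℝ × (Fin n → ℂ))) (u : ℝ × (Fin n → ℂ) → ℝ) : Prop :=
  UpperSemicontinuousOn u D ∧
    ∀ p₀ ∈ D, ∀ q, IsUpperTestAt u q p₀ →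
      ((Real.exp (deriv (fun t => q (t, p₀.2)) p₀.1 + G p₀.1 p₀.2 (q p₀)) * g p₀.2 : ℝ) : EReal)
        ≤ Fop f Γ (complexHessian (fun z => q (p₀.1, z)) p₀.2)

/-- Viscosity supersolution of `F(Hw) = e^{∂ₜw + G(t,z,w)} g(z)` on `D`. -/
def ParSupersolOn {n : ℕ} (f : (Fin n → ℝ) → ℝ) (Γ : Set (Fin n → ℝ))
    (G : ℝ → (Fin n → ℂ) → ℝ → ℝ) (g : (Fin n → ℂ) → ℝ)
    (D : Set (ℝ × (Fin n → ℂ))) (v : ℝ × (Fin n → ℂ) → ℝ) : Prop :=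
  LowerSemicontinuousOn v D ∧
    ∀ p₀ ∈ D, ∀ q, IsLowerTestAt v q p₀ →
      Fop f Γ (complexHessian (fun z => q (p₀.1, z)) p₀.2)
        ≤ ((Real.exp (deriv (fun t => q (t, p₀.2)) p₀.1 + G p₀.1 p₀.2 (q p₀)) * g p₀.2 : ℝ) : EReal)

/-- Upper semicontinuous envelope relative to `D`. -/
def uscEnvOn {X : Type*} [TopologicalSpace X] (D : Set X) (w : X → ℝ) (x : X) : ℝ :=
  Filter.limsup w (𝓝[D] x)

/-- Lower semicontinuous envelope relative to `D`. -/
def lscEnvOn {X : Type*} [TopologicalSpace X] (D : Set X) (w : X → ℝ) (x : X) : ℝ :=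
  Filter.liminf w (𝓝[D] x)

/-- Sup-convolution in time `u^k`. -/
def supConv {n : ℕ} (u : ℝ × (Fin n → ℂ) → ℝ) (A k : ℝ) (p : ℝ × (Fin n → ℂ)) : ℝ :=
  sSup ((fun s : ℝ => u (p.1 + s, p.2) - k * |s|) '' Set.Icc (-(A / k)) (A / k))

/-- Inf-convolution in time `u_k`. -/
def infConv {n : ℕ} (u : ℝ × (Fin n → ℂ) → ℝ) (A k : ℝ) (p : ℝ × (Fin n → ℂ)) : ℝ :=
  sInf ((fun s : ℝ => u (p.1 + s, p.2) + k * |s|) '' Set.Icc (-(A / k)) (A / k))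

/-- Parabolic superjet `𝒫^{2,+} u (p₀)`; `p` and `Q` are the ℝ-linear first- and
second-order data on `ℂⁿ ≅ ℝ^{2n}`. -/
def InParSuperjet {n : ℕ} (u : ℝ × (Fin n → ℂ) → ℝ) (p₀ : ℝ × (Fin n → ℂ)) (τ : ℝ)
    (p : (Fin n → ℂ) →ₗ[ℝ] ℝ) (Q : (Fin n → ℂ) →ₗ[ℝ] (Fin n → ℂ) →ₗ[ℝ] ℝ) : Prop :=
  ∀ ε > 0, ∀ᶠ x in 𝓝 p₀,
    u x ≤ u p₀ + τ * (x.1 - p₀.1) + p (x.2 - p₀.2) +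
      (1 / 2) * Q (x.2 - p₀.2) (x.2 - p₀.2) + ε * (|x.1 - p₀.1| + ‖x.2 - p₀.2‖ ^ 2)

/-- Parabolic subjet `𝒫^{2,−} v (p₀) = −𝒫^{2,+}(−v)(p₀)`. -/
def InParSubjet {n : ℕ} (v : ℝ × (Fin n → ℂ) → ℝ) (p₀ : ℝ × (Fin n → ℂ)) (τ : ℝ)
    (p : (Fin n → ℂ) →ₗ[ℝ] ℝ) (Q : (Fin n → ℂ) →ₗ[ℝ] (Fin n → ℂ) →ₗ[ℝ] ℝ) : Prop :=
  InParSuperjet (fun x => -(v x)) p₀ (-τ) (-p) (-Q)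

/-- An upper test function (C² near `z₀`) for `ψ` at `z₀` (elliptic case). -/
def IsUpperTestAtE {n : ℕ} (ψ q : (Fin n → ℂ) → ℝ) (z₀ : Fin n → ℂ) : Prop :=
  q z₀ = ψ z₀ ∧ (∀ᶠ z in 𝓝 z₀, ψ z ≤ q z) ∧ ContDiffAt ℝ 2 q z₀

/-- A lower test function (C² near `z₀`) for `ψ` at `z₀` (elliptic case). -/
def IsLowerTestAtE {n : ℕ} (ψ q : (Fin n → ℂ) → ℝ) (z₀ : Fin n → ℂ) : Prop :=
  q z₀ = ψ z₀ ∧ (∀ᶠ z in 𝓝 z₀, q z ≤ ψ z) ∧ ContDiffAt ℝ 2 q z₀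

/-- `ψ` is `Γ`-subharmonic on `D` in the viscosity sense: `F(Hψ) ≥ 0`. -/
def GammaSubharmonicOn {n : ℕ} (Γ : Set (Fin n → ℝ)) (D : Set (Fin n → ℂ))
    (ψ : (Fin n → ℂ) → ℝ) : Prop :=
  ∀ z₀ ∈ D, ∀ q, IsUpperTestAtE ψ q z₀ →
    ∃ hh : (complexHessian q z₀).IsHermitian, hh.eigenvalues ∈ closure Γ

/-- Viscosity subsolution of the elliptic equation `e^{K(z,ψ)} − F(Hψ) = 0` on `D`,
where the right-hand side `K z₀ (q z₀)` may depend on the tested value. -/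
def EllSubsolOn {n : ℕ} (f : (Fin n → ℝ) → ℝ) (Γ : Set (Fin n → ℝ))
    (K : (Fin n → ℂ) → ℝ → ℝ) (D : Set (Fin n → ℂ)) (ψ : (Fin n → ℂ) → ℝ) : Prop :=
  UpperSemicontinuousOn ψ D ∧
    ∀ z₀ ∈ D, ∀ q, IsUpperTestAtE ψ q z₀ →
      ((K z₀ (q z₀) : ℝ) : EReal) ≤ Fop f Γ (complexHessian q z₀)

/-- Viscosity subsolution of the time-derivative-free parabolic equation
`e^{H(t,z,w)} h(t,z) − F(Hw) = 0` on `D`. -/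
def ParSubsolNoDtOn {n : ℕ} (f : (Fin n → ℝ) → ℝ) (Γ : Set (Fin n → ℝ))
    (Hf : ℝ → (Fin n → ℂ) → ℝ → ℝ) (h : ℝ × (Fin n → ℂ) → ℝ)
    (D : Set (ℝ × (Fin n → ℂ))) (w : ℝ × (Fin n → ℂ) → ℝ) : Prop :=
  UpperSemicontinuousOn w D ∧
    ∀ p₀ ∈ D, ∀ q, IsUpperTestAt w q p₀ →
      ((Real.exp (Hf p₀.1 p₀.2 (q p₀)) * h p₀ : ℝ) : EReal)
        ≤ Fop f Γ (complexHessian (fun z => q (p₀.1, z)) p₀.2)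

/-- Subsolution of the Cauchy–Dirichlet problem. -/
def CDSubsol {n : ℕ} (f : (Fin n → ℝ) → ℝ) (Γ : Set (Fin n → ℝ))
    (G : ℝ → (Fin n → ℂ) → ℝ → ℝ) (g : (Fin n → ℂ) → ℝ)
    (Ω : Set (Fin n → ℂ)) (T : ℝ) (φ : ℝ → (Fin n → ℂ) → ℝ)
    (u₀ : (Fin n → ℂ) → ℝ) (u : ℝ × (Fin n → ℂ) → ℝ) : Prop :=
  UpperSemicontinuousOn u (Set.Ico 0 T ×ˢ closure Ω) ∧
    ParSubsolOn f Γ G g (Set.Ioo 0 T ×ˢ Ω) u ∧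
    (∀ t ∈ Set.Ico (0 : ℝ) T, ∀ z ∈ frontier Ω, u (t, z) ≤ φ t z) ∧
    (∀ z ∈ closure Ω, u (0, z) ≤ u₀ z)

/-- Supersolution of the Cauchy–Dirichlet problem. -/
def CDSupersol {n : ℕ} (f : (Fin n → ℝ) → ℝ) (Γ : Set (Fin n → ℝ))
    (G : ℝ → (Fin n → ℂ) → ℝ → ℝ) (g : (Fin n → ℂ) → ℝ)
    (Ω : Set (Fin n → ℂ)) (T : ℝ) (φ : ℝ → (Fin n → ℂ) → ℝ)
    (u₀ : (Fin n → ℂ) → ℝ) (v : ℝ × (Fin n → ℂ) → ℝ) : Prop :=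
  LowerSemicontinuousOn v (Set.Ico 0 T ×ˢ closure Ω) ∧
    ParSupersolOn f Γ G g (Set.Ioo 0 T ×ˢ Ω) v ∧
    (∀ t ∈ Set.Ico (0 : ℝ) T, ∀ z ∈ frontier Ω, φ t z ≤ v (t, z)) ∧
    (∀ z ∈ closure Ω, u₀ z ≤ v (0, z))

/-- `ε`-subbarrier for the Cauchy–Dirichlet problem. -/
def SubBarrier {n : ℕ} (f : (Fin n → ℝ) → ℝ) (Γ : Set (Fin n → ℝ))
    (G : ℝ → (Fin n → ℂ) → ℝ → ℝ) (g : (Fin n → ℂ) → ℝ)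
    (Ω : Set (Fin n → ℂ)) (T : ℝ) (φ : ℝ → (Fin n → ℂ) → ℝ)
    (u₀ : (Fin n → ℂ) → ℝ) (ε : ℝ) (u : ℝ × (Fin n → ℂ) → ℝ) : Prop :=
  UpperSemicontinuousOn u (Set.Ico 0 T ×ˢ closure Ω) ∧
    ParSubsolOn f Γ G g (Set.Ioo 0 T ×ˢ Ω) u ∧
    (∀ z ∈ closure Ω,
      u₀ z - ε ≤ lscEnvOn (Set.Ico 0 T ×ˢ closure Ω) u (0, z) ∧
        lscEnvOn (Set.Ico 0 T ×ˢ closure Ω) u (0, z) ≤ u (0, z) ∧ u (0, z) ≤ u₀ z) ∧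
    (∀ t ∈ Set.Ico (0 : ℝ) T, ∀ z ∈ frontier Ω,
      φ t z - ε ≤ lscEnvOn (Set.Ico 0 T ×ˢ closure Ω) u (t, z) ∧
        lscEnvOn (Set.Ico 0 T ×ˢ closure Ω) u (t, z) ≤ u (t, z) ∧ u (t, z) ≤ φ t z)

/-- `ε`-superbarrier for the Cauchy–Dirichlet problem. -/
def SuperBarrier {n : ℕ} (f : (Fin n → ℝ) → ℝ) (Γ : Set (Fin n → ℝ))
    (G : ℝ → (Fin n → ℂ) → ℝ → ℝ) (g : (Fin n → ℂ) → ℝ)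
    (Ω : Set (Fin n → ℂ)) (T : ℝ) (φ : ℝ → (Fin n → ℂ) → ℝ)
    (u₀ : (Fin n → ℂ) → ℝ) (ε : ℝ) (v : ℝ × (Fin n → ℂ) → ℝ) : Prop :=
  LowerSemicontinuousOn v (Set.Ico 0 T ×ˢ closure Ω) ∧
    ParSupersolOn f Γ G g (Set.Ioo 0 T ×ˢ Ω) v ∧
    (∀ z ∈ closure Ω,
      uscEnvOn (Set.Ico 0 T ×ˢ closure Ω) v (0, z) ≤ u₀ z + ε ∧
        v (0, z) ≤ uscEnvOn (Set.Ico 0 T ×ˢ closure Ω) v (0, z) ∧ u₀ z ≤ v (0, z)) ∧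
    (∀ t ∈ Set.Ico (0 : ℝ) T, ∀ z ∈ frontier Ω,
      uscEnvOn (Set.Ico 0 T ×ˢ closure Ω) v (t, z) ≤ φ t z + ε ∧
        v (t, z) ≤ uscEnvOn (Set.Ico 0 T ×ˢ closure Ω) v (t, z) ∧ φ t z ≤ v (t, z))

/-- Lipschitz in the time variable, uniformly on `[0,T) × cl(Ω)`. -/
def LipschitzInT {n : ℕ} (Ω : Set (Fin n → ℂ)) (T : ℝ) (u : ℝ × (Fin n → ℂ) → ℝ) : Prop :=
  ∃ L : ℝ, ∀ t₁ ∈ Set.Ico (0 : ℝ) T, ∀ t₂ ∈ Set.Ico (0 : ℝ) T, ∀ z ∈ closure Ω,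
    |u (t₁, z) - u (t₂, z)| ≤ L * |t₁ - t₂|

/-- The pair `(u₀, g)` is admissible. -/
def Admissible {n : ℕ} (f : (Fin n → ℝ) → ℝ) (Γ : Set (Fin n → ℝ))
    (Ω : Set (Fin n → ℂ)) (g u₀ : (Fin n → ℂ) → ℝ) : Prop :=
  ∀ ε > 0, ∃ uε : (Fin n → ℂ) → ℝ, ∃ Cε > 0,
    ContinuousOn uε (closure Ω) ∧ (∀ z ∈ closure Ω, u₀ z ≤ uε z ∧ uε z ≤ u₀ z + ε) ∧
      ∀ z₀ ∈ Ω, ∀ q, IsLowerTestAtE uε q z₀ →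
        Fop f Γ (complexHessian q z₀) ≤ ((Real.exp Cε * g z₀ : ℝ) : EReal)

/-- `Ω` is a strictly `Γ`-pseudoconvex domain. -/
def StrictlyGammaPseudoconvex {n : ℕ} (Γ : Set (Fin n → ℝ)) (Ω : Set (Fin n → ℂ)) : Prop :=
  ∃ ρ : (Fin n → ℂ) → ℝ, ContDiff ℝ (⊤ : ℕ∞) ρ ∧
    (∀ z ∈ closure Ω, ∃ hh : (complexHessian ρ z).IsHermitian, hh.eigenvalues ∈ Γ) ∧
    (∀ z ∈ frontier Ω, ρ z = 0) ∧ (∀ z ∈ Ω, ρ z < 0) ∧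
    ∀ z ∈ frontier Ω, fderiv ℝ ρ z ≠ 0

end


lemma second_order_aux {E : Type*} [NormedAddCommGroup E] [NormedSpace ℝ E]
    (U : E → ℝ) (K : Set E) (x : E) (ℓ : E → E →L[ℝ] ℝ) (C : ℝ) (hC0 : 0 ≤ C)
    (hC : ∀ k ∈ K, ∀ y, |U y - U k - ℓ k (y - k)| ≤ C * ‖y - k‖ ^ 2)
    (A : E →L[ℝ] E →L[ℝ] ℝ) (hA : HasFDerivWithinAt ℓ A K x)
    (hdens : ∀ ε > 0, ∃ r₀ > 0, ∀ r, 0 < r → r < r₀ → ∀ y, ‖y - x‖ ≤ r →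
      ∃ k ∈ K, ‖y - k‖ ≤ ε * r) :
    ∀ κ > 0, ∀ᶠ y in 𝓝 x,
      |U y - U x - ℓ x (y - x) - (1 / 2) * A (y - x) (y - x)| ≤ κ * ‖y - x‖ ^ 2 := by
  intro κ hκ
  set M : ℝ := 5 * C + 2 + 2 * ‖A‖ with hM
  have hM0 : 0 < M := by positivity
  obtain ⟨N, hN⟩ := exists_nat_gt (M / κ + 1)
  have hN1 : (1 : ℝ) < N := by
    have : 0 < M / κ := by positivity
    linarith
  have hN0 : (0 : ℝ) < N := by linarith
  set ε : ℝ := 1 / N with hε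
  have hε0 : 0 < ε := by positivity
  have hε1 : ε ≤ 1 := by rw [hε, div_le_one hN0]; linarith
  have hNε : (N : ℝ) * ε = 1 := by rw [hε]; field_simp
  have hMκ : M * ε ≤ κ := by
    have : M / κ ≤ N := by linarith
    rw [div_le_iff₀ hκ] at this
    rw [hε, mul_one_div, div_le_iff₀ hN0]; linarith
  obtain ⟨r₀, hr₀, hd⟩ := hdens ε hε0
  have hlo := hA.isLittleO.def hε0
  rw [eventually_nhdsWithin_iff, Metric.eventually_nhds_iff] at hlo
  obtain ⟨ρ, hρ, hlo⟩ := hlo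
  rw [Metric.eventually_nhds_iff]
  refine ⟨min r₀ (ρ / 2), by positivity, fun y hy => ?_⟩
  rw [dist_eq_norm] at hy
  set h := y - x with hh
  rcases eq_or_ne h 0 with h0 | h0
  · have : y = x := sub_eq_zero.mp (hh ▸ h0)
    rw [h0, this]; simp
  set r := ‖h‖ with hr
  have hrpos : 0 < r := norm_pos_iff.mpr h0
  have hr1 : r < r₀ := lt_of_lt_of_le hy (min_le_left _ _)
  have hr2 : r < ρ / 2 := lt_of_lt_of_le hy (min_le_right _ _)
  set Y : ℕ → E := fun i => x + ((i : ℝ) * ε) • h with hY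
  set D : ℕ → ℝ := fun i => U (Y i) - (U x + ((i : ℝ) * ε) * ℓ x h +
    (1 / 2) * ((i : ℝ) * ε) ^ 2 * A h h) with hD
  have hAh : |A h h| ≤ ‖A‖ * r ^ 2 := by
    have := A.le_opNorm₂ h h
    rw [Real.norm_eq_abs] at this
    nlinarith
  have step : ∀ i < N, |D (i + 1) - D i| ≤ M * ε ^ 2 * r ^ 2 := by
    intro i hi
    have hi1 : (i : ℝ) * ε ≤ 1 := by
      rw [← hNε]; gcongr
    have hi0 : 0 ≤ (i : ℝ) * ε := by positivity
    have hYx : ‖Y i - x‖ ≤ r := by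
      simp only [hY, add_sub_cancel_left, norm_smul, Real.norm_eq_abs, abs_of_nonneg hi0]
      nlinarith
    obtain ⟨k, hkK, hk⟩ := hd r hrpos hr1 (Y i) hYx
    have hs : Y (i + 1) - Y i = ε • h := by
      simp only [hY]; push_cast; module
    have hsn : ‖ε • h‖ = ε * r := by rw [norm_smul, Real.norm_eq_abs, abs_of_pos hε0]
    have hk1 : ‖Y (i + 1) - k‖ ≤ 2 * (ε * r) := by
      calc ‖Y (i + 1) - k‖ = ‖(Y (i + 1) - Y i) + (Y i - k)‖ := by congr 1; abel
        _ ≤ ‖Y (i + 1) - Y i‖ + ‖Y i - k‖ := norm_add_le _ _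
        _ ≤ _ := by rw [hs, hsn]; linarith
    have hkx : ‖k - x‖ ≤ 2 * r := by
      calc ‖k - x‖ = ‖(Y i - x) - (Y i - k)‖ := by congr 1; abel
        _ ≤ ‖Y i - x‖ + ‖Y i - k‖ := norm_sub_le _ _
        _ ≤ _ := by nlinarith
    have e1 := hC k hkK (Y (i + 1))
    have e2 := hC k hkK (Y i)
    have e1' : C * ‖Y (i + 1) - k‖ ^ 2 ≤ C * (2 * (ε * r)) ^ 2 := by gcongr
    have e2' : C * ‖Y i - k‖ ^ 2 ≤ C * (ε * r) ^ 2 := by gcongr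
    have e3 : ‖ℓ k - ℓ x - A (k - x)‖ ≤ ε * ‖k - x‖ := by
      apply hlo _ hkK
      rw [dist_eq_norm]; linarith
    have e3' : |(ℓ k - ℓ x - A (k - x)) (ε • h)| ≤ (ε * (2 * r)) * (ε * r) := by
      have := (ℓ k - ℓ x - A (k - x)).le_opNorm (ε • h)
      rw [Real.norm_eq_abs, hsn] at this
      refine this.trans ?_
      apply mul_le_mul_of_nonneg_right _ (by positivity)
      exact e3.trans (by gcongr)
    have e4 : |A (k - Y i) (ε • h)| ≤ ‖A‖ * (ε * r) * (ε * r) := by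
      have := A.le_opNorm₂ (k - Y i) (ε • h)
      rw [Real.norm_eq_abs, hsn] at this
      refine this.trans ?_
      gcongr
      rwa [norm_sub_rev]
    have hl : ℓ k (Y (i + 1) - k) - ℓ k (Y i - k) = ε * ℓ k h := by
      rw [← map_sub, sub_sub_sub_cancel_right, hs, map_smul, smul_eq_mul]
    have e3'' : (ℓ k - ℓ x - A (k - x)) (ε • h) = ε * ℓ k h - ε * ℓ x h - ε * A (k - x) h := by
      simp [mul_sub]
    have e4' : A (k - Y i) (ε • h) = ε * A (k - x) h - ε * ((i : ℝ) * ε) * A h h := by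
      have : k - Y i = (k - x) - ((i : ℝ) * ε) • h := by simp only [hY]; module
      rw [this]; simp [mul_sub]; ring
    rw [e3''] at e3'
    rw [e4'] at e4
    have hDD : D (i + 1) - D i = (U (Y (i + 1)) - U k - ℓ k (Y (i + 1) - k))
        - (U (Y i) - U k - ℓ k (Y i - k)) + (ε * ℓ k h - ε * ℓ x h - ε * A (k - x) h)
        + (ε * A (k - x) h - ε * ((i : ℝ) * ε) * A h h) - (1 / 2) * ε ^ 2 * A h h := by
      simp only [hD]; push_cast; linear_combination hl
    have e5 : |(1 / 2) * ε ^ 2 * A h h| ≤ (1 / 2) * ε ^ 2 * (‖A‖ * r ^ 2) := by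
      rw [abs_mul, abs_of_nonneg (by positivity : (0 : ℝ) ≤ 1 / 2 * ε ^ 2)]
      gcongr
    rw [hDD]
    have hAr : 0 ≤ ‖A‖ * ε ^ 2 * r ^ 2 := by positivity
    have b1 := abs_le.mp (e1.trans e1')
    have b2 := abs_le.mp (e2.trans e2')
    have b3 := abs_le.mp e3'
    have b4 := abs_le.mp e4
    have b5 := abs_le.mp e5
    have hMe : M * ε ^ 2 * r ^ 2 = C * (2 * (ε * r)) ^ 2 + C * (ε * r) ^ 2
        + ε * (2 * r) * (ε * r) + ‖A‖ * (ε * r) * (ε * r) + (1 / 2) * ε ^ 2 * (‖A‖ * r ^ 2)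
        + (1 / 2) * (‖A‖ * ε ^ 2 * r ^ 2) := by rw [hM]; ring
    rw [abs_le, hMe]
    constructor <;> linarith [b1.1, b1.2, b2.1, b2.2, b3.1, b3.2, b4.1, b4.2, b5.1, b5.2]
  have tot : ∀ i ≤ N, |D i| ≤ i * (M * ε ^ 2 * r ^ 2) := by
    intro i
    induction i with
    | zero => intro _; simp [hD, hY]
    | succ i ih =>
      intro hi
      have a1 := ih (by omega)
      have a2 := step i (by omega)
      push_cast
      have b1 := abs_le.mp a1
      have b2 := abs_le.mp a2
      rw [abs_le]
      constructor <;> linarith [b1.1, b1.2, b2.1, b2.2]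
  have fin := tot N le_rfl
  have hYN : Y N = y := by simp only [hY, hNε, hh]; simp
  have hDN : D N = U y - U x - ℓ x h - 1 / 2 * A h h := by
    simp only [hD, hYN, hNε]; ring
  rw [← hDN]
  refine fin.trans ?_
  calc (N : ℝ) * (M * ε ^ 2 * r ^ 2) = (N * ε) * (M * ε) * r ^ 2 := by ring
    _ ≤ _ := by rw [hNε, one_mul]; gcongr

lemma slope_lip_aux {E : Type*} [NormedAddCommGroup E] [NormedSpace ℝ E]
    (U : E → ℝ) (K : Set E) (ℓ : E → E →L[ℝ] ℝ) (C : ℝ) (hC0 : 0 ≤ C)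
    (hC : ∀ k ∈ K, ∀ y, |U y - U k - ℓ k (y - k)| ≤ C * ‖y - k‖ ^ 2)
    {k k' : E} (hk : k ∈ K) (hk' : k' ∈ K) : ‖ℓ k - ℓ k'‖ ≤ 6 * C * ‖k - k'‖ := by
  rcases eq_or_ne k k' with rfl | hne
  · simp
  have hd : 0 < ‖k - k'‖ := norm_pos_iff.mpr (sub_ne_zero.mpr hne)
  set d := ‖k - k'‖ with hdd
  refine ContinuousLinearMap.opNorm_le_bound _ (by positivity) fun w => ?_
  rcases eq_or_ne w 0 with rfl | hw
  · simp
  have hwn : 0 < ‖w‖ := norm_pos_iff.mpr hw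
  set h := (d / ‖w‖) • w with hh
  have hn : ‖h‖ = d := by
    rw [hh, norm_smul, Real.norm_eq_abs, abs_of_pos (by positivity)]; field_simp
  have e1 := hC k hk (k' + h)
  have e2 := hC k' hk' (k' + h)
  have e3 := hC k hk k'
  have n1 : ‖k' + h - k‖ ≤ 2 * d := by
    calc ‖k' + h - k‖ = ‖h - (k - k')‖ := by congr 1; abel
      _ ≤ ‖h‖ + ‖k - k'‖ := norm_sub_le _ _
      _ = _ := by rw [hn]; ring
  have e1' : C * ‖k' + h - k‖ ^ 2 ≤ C * (2 * d) ^ 2 := by gcongr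
  rw [add_sub_cancel_left, hn] at e2
  rw [norm_sub_rev, ← hdd] at e3
  have hl : ℓ k (k' + h - k) = ℓ k (k' - k) + ℓ k h := by rw [← map_add]; congr 1; abel
  have key : |(ℓ k - ℓ k') h| ≤ 6 * C * d ^ 2 := by
    have b1 := abs_le.mp (e1.trans e1')
    have b2 := abs_le.mp e2
    have b3 := abs_le.mp e3
    rw [hl] at b1
    rw [ContinuousLinearMap.sub_apply, abs_le]
    constructor <;> linarith [b1.1, b1.2, b2.1, b2.2, b3.1, b3.2]
  rw [hh, map_smul, smul_eq_mul, abs_mul, abs_of_pos (by positivity : 0 < d / ‖w‖)] at key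
  rw [Real.norm_eq_abs]
  have : d / ‖w‖ * |(ℓ k - ℓ k') w| * ‖w‖ = d * |(ℓ k - ℓ k') w| := by field_simp
  have k2 : d * |(ℓ k - ℓ k') w| ≤ d * (6 * C * d * ‖w‖) := by
    rw [← this]
    calc _ ≤ (6 * C * d ^ 2) * ‖w‖ := by gcongr
      _ = _ := by ring
  exact le_of_mul_le_mul_left k2 hd

/-- Density points: every nearby ball meets the set. -/
lemma density_aux {E : Type*} [NormedAddCommGroup E] [NormedSpace ℝ E] [FiniteDimensional ℝ E]
    [MeasurableSpace E] [BorelSpace E] (μ : MeasureTheory.Measure E) [μ.IsAddHaarMeasure]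
    (K : Set E) : ∀ᵐ x ∂μ.restrict K, ∀ ε > 0, ∃ r₀ > 0, ∀ r, 0 < r → r < r₀ →
      ∀ y, ‖y - x‖ ≤ r → ∃ k ∈ K, ‖y - k‖ ≤ ε * r := by
  have h1 : ∀ᵐ x ∂μ.restrict K, ∀ m : ℕ, ∀ (w : ℕ → E) (δ : ℕ → ℝ)
      (_ : Tendsto δ atTop (𝓝[>] 0))
      (_ : ∀ᶠ j in atTop, x ∈ Metric.closedBall (w j) (m * δ j)),
      Tendsto (fun j => μ (K ∩ Metric.closedBall (w j) (δ j)) /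
        μ (Metric.closedBall (w j) (δ j))) atTop (𝓝 1) := by
    rw [MeasureTheory.ae_all_iff]
    intro m
    filter_upwards [IsUnifLocDoublingMeasure.ae_tendsto_measure_inter_div μ K (m : ℝ)] with x hx
    intro w δ hδ hw
    exact hx w δ hδ hw
  filter_upwards [h1] with x hx ε hε
  by_contra! hcon
  have hcon' : ∀ j : ℕ, ∃ r, 0 < r ∧ r < 1 / ((j : ℝ) + 1) ∧ ∃ y, ‖y - x‖ ≤ r ∧
      ∀ k ∈ K, ε * r < ‖y - k‖ := fun j => by
    obtain ⟨r, h1, h2, y, h3, h4⟩ := hcon (1 / ((j : ℝ) + 1)) (by positivity)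
    exact ⟨r, h1, h2, y, h3, h4⟩
  choose r hr0 hr1 y hy hyK using hcon'
  obtain ⟨m, hm⟩ := exists_nat_gt (1 / ε)
  have hmε : 1 ≤ m * ε := by
    rw [div_lt_iff₀ hε] at hm; exact hm.le
  have hlim : Tendsto (fun j => ε * r j) atTop (𝓝[>] 0) := by
    rw [tendsto_nhdsWithin_iff]
    refine ⟨?_, Eventually.of_forall fun j => mul_pos hε (hr0 j)⟩
    have : Tendsto r atTop (𝓝 0) :=
      squeeze_zero (fun j => (hr0 j).le) (fun j => (hr1 j).le) tendsto_one_div_add_atTop_nhds_zero_nat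
    simpa using this.const_mul ε
  have ht := hx m y (fun j => ε * r j) hlim (Eventually.of_forall fun j => by
    rw [Metric.mem_closedBall, dist_eq_norm, norm_sub_rev]
    calc ‖y j - x‖ ≤ 1 * r j := by rw [one_mul]; exact hy j
      _ ≤ (m * ε) * r j := by gcongr; exact (hr0 j).le
      _ = _ := by ring)
  have hz : (fun j => μ (K ∩ Metric.closedBall (y j) (ε * r j)) /
        μ (Metric.closedBall (y j) (ε * r j))) = fun _ => 0 := by
    funext j
    have : K ∩ Metric.closedBall (y j) (ε * r j) = ∅ := by
      ext k
      simp only [mem_inter_iff, Metric.mem_closedBall, mem_empty_iff_false, iff_false, not_and, not_le]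
      intro hk
      rw [dist_eq_norm, norm_sub_rev]; exact hyK j k hk
    rw [this]; simp
  rw [hz] at ht
  have := tendsto_nhds_unique ht tendsto_const_nhds
  exact one_ne_zero this

lemma usc_pair_aux {E : Type*} [TopologicalSpace E] {D : Set E} {u v : E → ℝ}
    (hu : UpperSemicontinuousOn u D) (hv : LowerSemicontinuousOn v D) :
    UpperSemicontinuousOn (fun p : E × E => u p.1 - v p.2) (D ×ˢ D) := by
  have h1 : UpperSemicontinuousOn (fun p : E × E => u p.1) (D ×ˢ D) := by
    intro p hp y hy
    exact ((continuous_fst.tendsto _).mono_left nhdsWithin_le_nhds |> fun (h : Tendsto Prod.fst (𝓝[D ×ˢ D] p) (𝓝 p.1)) =>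
      (tendsto_nhdsWithin_iff.mpr ⟨h, eventually_mem_nhdsWithin.mono fun q hq => hq.1⟩)).eventually
      (hu p.1 hp.1 y hy)
  have h2 : UpperSemicontinuousOn (fun p : E × E => - v p.2) (D ×ˢ D) := by
    intro p hp y hy
    have := ((continuous_snd.tendsto _).mono_left nhdsWithin_le_nhds |> fun (h : Tendsto Prod.snd (𝓝[D ×ˢ D] p) (𝓝 p.2)) =>
      (tendsto_nhdsWithin_iff.mpr ⟨h, eventually_mem_nhdsWithin.mono fun q hq => hq.2⟩)).eventually
      (hv p.2 hp.2 (-y) (by simpa using neg_lt_neg hy))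
    filter_upwards [this] with q hq
    linarith
  simpa [sub_eq_add_neg] using h1.add h2

/-- A Jensen–Ishii type lemma. -/
lemma jensen_ishii_aux {E : Type*} [NormedAddCommGroup E] [NormedSpace ℝ E] [FiniteDimensional ℝ E]
    [MeasurableSpace E] [BorelSpace E]
    (D : Set E) (hD : IsCompact D) (hDne : D.Nonempty) (u v : E → ℝ)
    (hu : UpperSemicontinuousOn u D) (hv : LowerSemicontinuousOn v D)
    (B : E →L[ℝ] E →L[ℝ] ℝ) (hBs : ∀ x y, B x y = B y x) (c : ℝ) (hc : 0 < c)
    (hBc : ∀ h, c * ‖h‖ ^ 2 ≤ B h h) (r : ℝ) (hr : 0 < r) :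
    ∃ a ∈ D, ∃ b ∈ D, ∃ e : E, ‖e‖ < r ∧ ∃ A : E →L[ℝ] E →L[ℝ] ℝ,
      (∀ d ∈ D, u d - v d + 4 * B e d ≤
        u a - v b - (1 / 2) * B (a - b) (a - b) + 2 * B e (a + b)) ∧
      (∀ κ > 0, ∀ᶠ h in 𝓝 (0 : E), a + h ∈ D →
        u (a + h) ≤ u a + B (a - b - (2 : ℝ) • e) h + (1 / 2) * A h h + κ * ‖h‖ ^ 2) ∧
      (∀ κ > 0, ∀ᶠ h in 𝓝 (0 : E), b + h ∈ D →
        v b + B (a - b + (2 : ℝ) • e) h + (1 / 2) * A h h - κ * ‖h‖ ^ 2 ≤ v (b + h)) := by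
  -- sup- and inf-convolutions
  have hBcont : ∀ x : E, Continuous fun y => B (x - y) (x - y) := fun x => by fun_prop
  have exY : ∀ x : E, ∃ y ∈ D, ∀ z ∈ D, u z - B (x - z) (x - z) ≤ u y - B (x - y) (x - y) := by
    intro x
    have h1 : UpperSemicontinuousOn (fun y => u y + -(B (x - y) (x - y))) D :=
      hu.add ((hBcont x).neg.upperSemicontinuous.upperSemicontinuousOn _)
    obtain ⟨y, hy, hm⟩ := h1.exists_isMaxOn hDne hD
    exact ⟨y, hy, fun z hz => by have := hm hz; simp only [mem_setOf_eq] at this; linarith⟩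
  have exY' : ∀ x : E, ∃ y ∈ D, ∀ z ∈ D, v y + B (x - y) (x - y) ≤ v z + B (x - z) (x - z) := by
    intro x
    have h1 : LowerSemicontinuousOn (fun y => v y + (B (x - y) (x - y))) D :=
      hv.add ((hBcont x).lowerSemicontinuous.lowerSemicontinuousOn _)
    obtain ⟨y, hy, hm⟩ := h1.exists_isMinOn hDne hD
    exact ⟨y, hy, fun z hz => by have := hm hz; simp only [mem_setOf_eq] at this; linarith⟩
  choose Y hYD hY using exY
  choose Z hZD hZ using exY'
  set U : E → ℝ := fun x => u (Y x) - B (x - Y x) (x - Y x) with hU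
  set V : E → ℝ := fun x => v (Z x) + B (x - Z x) (x - Z x) with hV
  have hquad : ∀ x y w : E, B (y - w) (y - w) =
      B (x - w) (x - w) + 2 * B (x - w) (y - x) + B (y - x) (y - x) := by
    intro x y w
    have : y - w = (x - w) + (y - x) := by abel
    rw [this]; simp only [map_add, ContinuousLinearMap.add_apply]; rw [hBs (y - x) (x - w)]; ring
  -- contact points
  have ident : ∀ e x' a b : E, - B (x' - a) (x' - a) - B (x' - b) (x' - b) + 4 * B e x' =
      - (1 / 2) * B (a - b) (a - b) + 2 * B e (a + b) + 2 * B e e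
      - (1 / 2) * B ((2 : ℝ) • x' - a - b - (2 : ℝ) • e) ((2 : ℝ) • x' - a - b - (2 : ℝ) • e) := by
    intro e x' a b
    simp only [map_sub, map_add, map_smul, ContinuousLinearMap.sub_apply,
      ContinuousLinearMap.smul_apply, smul_eq_mul]
    rw [hBs a x', hBs b x', hBs b a, hBs x' e, hBs a e, hBs b e]
    ring
  have hB0 : ∀ h, 0 ≤ B h h := fun h => le_trans (by positivity) (hBc h)
  have contact : ∀ e : E, ∃ x : E, (2 : ℝ) • x - Y x - Z x - (2 : ℝ) • e = 0 ∧
      (∀ x', U x' - V x' + 4 * B e x' ≤ U x - V x + 4 * B e x) ∧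
      (∀ d ∈ D, u d - v d + 4 * B e d ≤ u (Y x) - v (Z x)
        - (1 / 2) * B (Y x - Z x) (Y x - Z x) + 2 * B e (Y x + Z x)) := by
    intro e
    have h1 : UpperSemicontinuousOn (fun p : E × E => (u p.1 - v p.2) +
        (- (1 / 2) * B (p.1 - p.2) (p.1 - p.2) + 2 * B e (p.1 + p.2))) (D ×ˢ D) := by
      refine (usc_pair_aux hu hv).add (Continuous.upperSemicontinuous ?_ |>.upperSemicontinuousOn _)
      fun_prop
    obtain ⟨⟨a, b⟩, ⟨haD, hbD⟩, hm⟩ := h1.exists_isMaxOn (hDne.prod hDne) (hD.prod hD)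
    have hm' : ∀ p ∈ D, ∀ q ∈ D, (u p - v q) +
        (- (1 / 2) * B (p - q) (p - q) + 2 * B e (p + q)) ≤ (u a - v b) +
        (- (1 / 2) * B (a - b) (a - b) + 2 * B e (a + b)) := by
      intro p hp q hq
      exact hm (show (p, q) ∈ D ×ˢ D from ⟨hp, hq⟩)
    simp only at haD hbD
    set x : E := (1 / 2 : ℝ) • (a + b) + e with hx
    have hx0 : (2 : ℝ) • x - a - b - (2 : ℝ) • e = 0 := by rw [hx]; module
    have i1 := ident e x a b
    rw [hx0] at i1
    simp only [map_zero, mul_zero, sub_zero] at i1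
    have y1 := hY x a haD
    have z1 := hZ x b hbD
    have i2 := ident e x (Y x) (Z x)
    have i3 := hm' (Y x) (hYD x) (Z x) (hZD x)
    set w := (2 : ℝ) • x - Y x - Z x - (2 : ℝ) • e with hw
    have hw0 : B w w ≤ 0 := by linarith
    have hw1 : w = 0 := by
      have := hBc w
      have h3 : c * ‖w‖ ^ 2 ≤ 0 := by linarith
      have h4 : ‖w‖ ^ 2 ≤ 0 := by
        by_contra hcon
        push Not at hcon
        have := mul_pos hc hcon
        linarith
      have h5 : ‖w‖ = 0 := by
        have := sq_nonneg ‖w‖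
        exact pow_eq_zero_iff (two_ne_zero) |>.mp (le_antisymm h4 this)
      exact norm_eq_zero.mp h5
    refine ⟨x, hw1, ?_, ?_⟩
    · intro x'
      have i4 := ident e x' (Y x') (Z x')
      have i5 := hm' (Y x') (hYD x') (Z x') (hZD x')
      have i6 := hB0 ((2 : ℝ) • x' - Y x' - Z x' - (2 : ℝ) • e)
      simp only [hU, hV]
      linarith
    · intro d hd
      have i5 := hm' d hd d hd
      have : B e (d + d) = 2 * B e d := by rw [map_add]; ring
      simp only [sub_self, map_zero, this] at i5
      have i7 := hB0 w
      linarith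
  choose X hX0 hXmax hXnear using contact
  set K : Set E := X '' Metric.ball 0 r with hK
  set ℓ : E → E →L[ℝ] ℝ := fun x => B ((2 : ℝ) • (Y x - x)) with hℓ
  -- two-sided quadratic bounds
  have lowU : ∀ x y, U x + ℓ x (y - x) - ‖B‖ * ‖y - x‖ ^ 2 ≤ U y := by
    intro x y
    have h1 := hY y (Y x) (hYD x)
    have h2 := hquad x y (Y x)
    have h3 : B (y - x) (y - x) ≤ ‖B‖ * ‖y - x‖ ^ 2 := by
      have := (le_abs_self _).trans (B.le_opNorm₂ (y - x) (y - x))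
      rw [pow_two, ← mul_assoc]; exact this
    have h4 : ℓ x (y - x) = - (2 * B (x - Y x) (y - x)) := by
      simp only [hℓ]
      have : (2 : ℝ) • (Y x - x) = (-2 : ℝ) • (x - Y x) := by module
      rw [this]; simp
    simp only [hU]
    rw [h4]
    linarith
  have upV : ∀ x y, V y ≤ V x + 2 * B (x - Z x) (y - x) + ‖B‖ * ‖y - x‖ ^ 2 := by
    intro x y
    have h1 := hZ y (Z x) (hZD x)
    have h2 := hquad x y (Z x)
    have h3 : B (y - x) (y - x) ≤ ‖B‖ * ‖y - x‖ ^ 2 := by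
      have := (le_abs_self _).trans (B.le_opNorm₂ (y - x) (y - x))
      rw [pow_two, ← mul_assoc]; exact this
    simp only [hV]
    linarith
  have hZe : ∀ e h, 2 * B (X e - Z (X e)) h - 4 * B e h = ℓ (X e) h := by
    intro e h
    have : (2 : ℝ) • (Y (X e) - X e) = (2 : ℝ) • (X e - Z (X e)) - (4 : ℝ) • e := by
      have h0 := hX0 e
      have : (2 : ℝ) • ((2 : ℝ) • X e - Y (X e) - Z (X e) - (2 : ℝ) • e) = 0 := by rw [h0]; simp
      rw [← sub_eq_zero, ← neg_eq_zero, ← this]; module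
    simp only [hℓ]
    rw [this]; simp
  have hC : ∀ k ∈ K, ∀ y, |U y - U k - ℓ k (y - k)| ≤ ‖B‖ * ‖y - k‖ ^ 2 := by
    rintro k ⟨e, -, rfl⟩ y
    have h1 := lowU (X e) y
    have h2 := upV (X e) y
    have h3 := hXmax e y
    have h4 := hZe e (y - X e)
    have h5 : B e (y - X e) = B e y - B e (X e) := map_sub _ _ _
    rw [abs_le]
    constructor <;> linarith
  have hlip : ∀ k ∈ K, ∀ k' ∈ K, ‖ℓ k - ℓ k'‖ ≤ 6 * ‖B‖ * ‖k - k'‖ := fun k hk k' hk' =>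
    slope_lip_aux U K ℓ ‖B‖ (norm_nonneg B) hC hk hk'
  -- the recovered perturbation is Lipschitz on `K`
  have hBinv : ∀ h : E, c * ‖h‖ ≤ ‖B h‖ := by
    intro h
    rcases eq_or_ne h 0 with rfl | hh
    · simp
    have hp : 0 < ‖h‖ := norm_pos_iff.mpr hh
    have h1 := hBc h
    have h2 := (le_abs_self _).trans ((B h).le_opNorm h)
    have : (c * ‖h‖) * ‖h‖ ≤ ‖B h‖ * ‖h‖ := by nlinarith
    exact le_of_mul_le_mul_right this hp
  set LY : ℝ := 1 + 3 * ‖B‖ / c with hLY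
  have hLY0 : 0 ≤ LY := by positivity
  have hYlip : ∀ k ∈ K, ∀ k' ∈ K, ‖Y k - Y k'‖ ≤ LY * ‖k - k'‖ := by
    intro k hk k' hk'
    have h1 := hlip k hk k' hk'
    have h2 : ℓ k - ℓ k' = (2 : ℝ) • B ((Y k - Y k') - (k - k')) := by
      simp only [hℓ]; rw [← map_sub, ← map_smul]; congr 1; module
    rw [h2, norm_smul] at h1
    have h3 := hBinv ((Y k - Y k') - (k - k'))
    have h4 : c * ‖(Y k - Y k') - (k - k')‖ ≤ 3 * ‖B‖ * ‖k - k'‖ := by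
      simp only [norm_neg, Real.norm_ofNat] at h1
      linarith
    have h5 : ‖(Y k - Y k') - (k - k')‖ ≤ 3 * ‖B‖ / c * ‖k - k'‖ := by
      rw [div_mul_eq_mul_div, le_div_iff₀ hc]; linarith
    have h6 : ‖Y k - Y k'‖ ≤ ‖(Y k - Y k') - (k - k')‖ + ‖k - k'‖ := by
      calc ‖Y k - Y k'‖ = ‖((Y k - Y k') - (k - k')) + (k - k')‖ := by congr 1; abel
        _ ≤ _ := norm_add_le _ _
    rw [hLY]; linarith
  -- `Z` on `K`
  have hVC : ∀ k ∈ K, ∀ y, |V y - V k - B ((2 : ℝ) • (k - Z k)) (y - k)| ≤ ‖B‖ * ‖y - k‖ ^ 2 := by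
    rintro k ⟨e, -, rfl⟩ y
    have h1 := lowU (X e) y
    have h2 := upV (X e) y
    have h3 := hXmax e y
    have h4 := hZe e (y - X e)
    have h5 : B e (y - X e) = B e y - B e (X e) := map_sub _ _ _
    have h6 : B ((2 : ℝ) • (X e - Z (X e))) (y - X e) = 2 * B (X e - Z (X e)) (y - X e) := by simp
    rw [abs_le, h6]
    constructor <;> linarith
  have hZlip : ∀ k ∈ K, ∀ k' ∈ K, ‖Z k - Z k'‖ ≤ LY * ‖k - k'‖ := by
    intro k hk k' hk'
    have h1 := slope_lip_aux V K (fun k => B ((2 : ℝ) • (k - Z k))) ‖B‖ (norm_nonneg B) hVC hk hk'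
    have h2 : B ((2 : ℝ) • (k - Z k)) - B ((2 : ℝ) • (k' - Z k')) =
        (-2 : ℝ) • B ((Z k - Z k') - (k - k')) := by
      rw [← map_sub, ← map_smul]; congr 1; module
    rw [h2, norm_smul] at h1
    have h3 := hBinv ((Z k - Z k') - (k - k'))
    have h4 : c * ‖(Z k - Z k') - (k - k')‖ ≤ 3 * ‖B‖ * ‖k - k'‖ := by
      simp only [norm_neg, Real.norm_ofNat] at h1
      linarith
    have h5 : ‖(Z k - Z k') - (k - k')‖ ≤ 3 * ‖B‖ / c * ‖k - k'‖ := by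
      rw [div_mul_eq_mul_div, le_div_iff₀ hc]; linarith
    have h6 : ‖Z k - Z k'‖ ≤ ‖(Z k - Z k') - (k - k')‖ + ‖k - k'‖ := by
      calc ‖Z k - Z k'‖ = ‖((Z k - Z k') - (k - k')) + (k - k')‖ := by congr 1; abel
        _ ≤ _ := norm_add_le _ _
    rw [hLY]; linarith
  set P : E → E := fun x => x - (1 / 2 : ℝ) • (Y x + Z x) with hP
  have hPX : ∀ e, P (X e) = e := by
    intro e
    have h0 := hX0 e
    have : (1 / 2 : ℝ) • ((2 : ℝ) • X e - Y (X e) - Z (X e) - (2 : ℝ) • e) = 0 := by rw [h0]; simp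
    simp only [hP]
    rw [← sub_eq_zero, ← this]; module
  have hPlip : LipschitzOnWith (1 + LY).toNNReal P K := by
    rw [lipschitzOnWith_iff_norm_sub_le]
    intro k hk k' hk'
    rw [Real.coe_toNNReal _ (by positivity)]
    have h1 := hYlip k hk k' hk'
    have h2 := hZlip k hk k' hk'
    have h3 : P k - P k' = (k - k') - (1 / 2 : ℝ) • ((Y k - Y k') + (Z k - Z k')) := by
      simp only [hP]; module
    rw [h3]
    calc _ ≤ ‖k - k'‖ + ‖(1 / 2 : ℝ) • ((Y k - Y k') + (Z k - Z k'))‖ := norm_sub_le _ _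
      _ ≤ ‖k - k'‖ + (1 / 2) * (‖Y k - Y k'‖ + ‖Z k - Z k'‖) := by
        rw [norm_smul]; norm_num
        exact norm_add_le _ _
      _ ≤ _ := by linarith
  have hYlip' : LipschitzOnWith LY.toNNReal Y K := by
    rw [lipschitzOnWith_iff_norm_sub_le]
    intro k hk k' hk'
    rw [Real.coe_toNNReal _ hLY0]
    exact hYlip k hk k' hk'
  -- positivity of the measure of `K`
  set μ : MeasureTheory.Measure E := MeasureTheory.Measure.hausdorffMeasure (Module.finrank ℝ E : ℝ)
    with hμ
  have : μ.IsAddHaarMeasure := by rw [hμ]; infer_instance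
  have hKpos : μ K ≠ 0 := by
    intro h0
    have h1 := hPlip.hausdorffMeasure_image_le (d := (Module.finrank ℝ E : ℝ)) (by positivity)
    rw [← hμ, h0, mul_zero] at h1
    have h2 : Metric.ball (0 : E) r ⊆ P '' K := by
      intro e he
      exact ⟨X e, ⟨e, he, rfl⟩, hPX e⟩
    have h3 : μ (Metric.ball (0 : E) r) ≤ 0 := (MeasureTheory.measure_mono h2).trans h1
    exact absurd h3 (not_le.mpr (Metric.measure_ball_pos μ 0 hr))
  have hdiff := hYlip'.ae_differentiableWithinAt_of_mem (μ := μ)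
  have hdens := density_aux μ K
  have : ∃ x ∈ K, DifferentiableWithinAt ℝ Y K x ∧ ∀ ε > 0, ∃ r₀ > 0, ∀ r, 0 < r → r < r₀ →
      ∀ y, ‖y - x‖ ≤ r → ∃ k ∈ K, ‖y - k‖ ≤ ε * r := by
    by_contra hcon
    apply hKpos
    have hs : K ⊆ {x | ¬ (x ∈ K → DifferentiableWithinAt ℝ Y K x)} ∪
        (K ∩ {x | ¬ ∀ ε > 0, ∃ r₀ > 0, ∀ r, 0 < r → r < r₀ →
      ∀ y, ‖y - x‖ ≤ r → ∃ k ∈ K, ‖y - k‖ ≤ ε * r}) := by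
      intro x hx
      by_cases h1 : DifferentiableWithinAt ℝ Y K x
      · right
        exact ⟨hx, fun h2 => hcon ⟨x, hx, h1, h2⟩⟩
      · left
        exact fun h => h1 (h hx)
    refine MeasureTheory.measure_mono_null hs (MeasureTheory.measure_union_null hdiff ?_)
    have h2 := MeasureTheory.ae_iff.mp hdens
    rw [inter_comm]
    exact le_antisymm ((MeasureTheory.Measure.le_restrict_apply _ _).trans h2.le) zero_le
  obtain ⟨x, hxK, hxd, hxdens⟩ := this
  have hA : HasFDerivWithinAt ℓ
      (B.comp ((2 : ℝ) • (fderivWithin ℝ Y K x - ContinuousLinearMap.id ℝ E))) K x := by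
    have h1 := (hxd.hasFDerivWithinAt.sub (hasFDerivWithinAt_id x K)).const_smul (2 : ℝ)
    exact B.hasFDerivAt.comp_hasFDerivWithinAt x h1
  set A := B.comp ((2 : ℝ) • (fderivWithin ℝ Y K x - ContinuousLinearMap.id ℝ E)) with hAdef
  have hexp := second_order_aux U K x ℓ ‖B‖ (norm_nonneg B) hC A hA hxdens
  obtain ⟨e, he, rfl⟩ := hxK
  have hlin1 : B (Y (X e) - Z (X e) - (2 : ℝ) • e) = ℓ (X e) := by
    simp only [hℓ]
    congr 1
    have h0 := hX0 e
    rw [← sub_eq_zero, ← neg_eq_zero, ← neg_eq_zero, ← h0]; module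
  have hlin2 : ∀ h, B (Y (X e) - Z (X e) + (2 : ℝ) • e) h = ℓ (X e) h + 4 * B e h := by
    intro h
    rw [← hlin1]
    have : Y (X e) - Z (X e) + (2 : ℝ) • e = (Y (X e) - Z (X e) - (2 : ℝ) • e) + (4 : ℝ) • e := by
      module
    rw [this]; simp
  have htend : Tendsto (fun h : E => X e + h) (𝓝 0) (𝓝 (X e)) := by
    have : Continuous fun h : E => X e + h := by fun_prop
    simpa using this.tendsto 0
  refine ⟨Y (X e), hYD _, Z (X e), hZD _, e, by simpa using he, A, hXnear e, ?_, ?_⟩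
  · intro κ hκ
    filter_upwards [htend.eventually (hexp κ hκ)] with h hh hmem
    rw [add_sub_cancel_left] at hh
    have h1 := hY (X e + h) (Y (X e) + h) hmem
    rw [add_sub_add_right_eq_sub] at h1
    have h2 := (abs_le.mp hh).2
    rw [hlin1]
    simp only [hU] at h2
    linarith
  · intro κ hκ
    filter_upwards [htend.eventually (hexp κ hκ)] with h hh hmem
    rw [add_sub_cancel_left] at hh
    have h1 := hZ (X e + h) (Z (X e) + h) hmem
    rw [add_sub_add_right_eq_sub] at h1
    have h2 := (abs_le.mp hh).1
    have h3 := hXmax e (X e + h)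
    rw [hlin2, map_add] at *
    simp only [hU, hV] at h2 h3
    linarith

/-- The real Euclidean inner product on `ℂⁿ` as a continuous bilinear map. -/
noncomputable def SB (n : ℕ) : (Fin n → ℂ) →L[ℝ] (Fin n → ℂ) →L[ℝ] ℝ :=
  ∑ i, (innerSL ℝ (E := ℂ)).bilinearComp
    (ContinuousLinearMap.proj (R := ℝ) (φ := fun _ : Fin n => ℂ) i)
    (ContinuousLinearMap.proj (R := ℝ) (φ := fun _ : Fin n => ℂ) i)

lemma SB_apply {n : ℕ} (v w : Fin n → ℂ) : SB n v w = ∑ i, inner ℝ (v i) (w i) := by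
  simp [SB]

lemma SB_symm {n : ℕ} (v w : Fin n → ℂ) : SB n v w = SB n w v := by
  rw [SB_apply, SB_apply]
  exact Finset.sum_congr rfl fun i _ => real_inner_comm _ _

lemma SB_self_nonneg {n : ℕ} (v : Fin n → ℂ) : 0 ≤ SB n v v := by
  rw [SB_apply]
  exact Finset.sum_nonneg fun i _ => real_inner_self_nonneg

lemma norm_sq_le_SB {n : ℕ} (v : Fin n → ℂ) : ‖v‖ ^ 2 ≤ SB n v v := by
  have h : ‖v‖ ≤ Real.sqrt (SB n v v) := by
    rw [pi_norm_le_iff_of_nonneg (Real.sqrt_nonneg _)]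
    intro i
    apply Real.le_sqrt_of_sq_le
    rw [SB_apply, ← real_inner_self_eq_norm_sq]
    exact Finset.single_le_sum (f := fun i => inner ℝ (v i) (v i))
      (fun i _ => real_inner_self_nonneg) (Finset.mem_univ i)
  calc ‖v‖ ^ 2 ≤ Real.sqrt (SB n v v) ^ 2 := by gcongr
    _ = _ := Real.sq_sqrt (SB_self_nonneg v)

/-- The complex matrix attached to a bilinear form on `ℝ × ℂⁿ`. -/
noncomputable def hessM {n : ℕ} (Q : (Fin n → ℂ) →L[ℝ] (Fin n → ℂ) →L[ℝ] ℝ) :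
    Matrix (Fin n) (Fin n) ℂ := fun j k =>
  ((((Q (Pi.single j 1) (Pi.single k 1) + Q (Pi.single k 1) (Pi.single j 1)) +
      (Q (Pi.single j Complex.I) (Pi.single k Complex.I) +
        Q (Pi.single k Complex.I) (Pi.single j Complex.I))) / 4 : ℝ) : ℂ) +
    Complex.I * ((((Q (Pi.single j 1) (Pi.single k Complex.I) +
      Q (Pi.single k Complex.I) (Pi.single j 1)) -
        (Q (Pi.single j Complex.I) (Pi.single k 1) +
          Q (Pi.single k 1) (Pi.single j Complex.I))) / 4 : ℝ) : ℂ)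

lemma hess_quad_aux {Z : Type*} [NormedAddCommGroup Z] [NormedSpace ℝ Z] (c : ℝ) (L : Z →L[ℝ] ℝ)
    (Q R : Z →L[ℝ] Z →L[ℝ] ℝ) (a v w : Z) :
    iteratedFDeriv ℝ 2 (fun z => c + L (z - a) + Q (z - a) (z - a) + R z z) a ![v, w] =
      (Q v w + Q w v) + (R v w + R w v) := by
  have h1 : fderiv ℝ (fun z => c + L (z - a) + Q (z - a) (z - a) + R z z) =
      fun z => L + (Q (z - a) + Q.flip (z - a)) + (R z + R.flip z) := by
    funext z
    apply HasFDerivAt.fderiv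
    have hs : HasFDerivAt (fun z : Z => z - a) (ContinuousLinearMap.id ℝ Z) z :=
      (hasFDerivAt_id z).sub_const a
    have hL := (L.hasFDerivAt (x := z - a)).comp z hs
    have hQ := (Q.hasFDerivAt (x := z - a)).comp z hs |>.clm_apply hs
    have hR := (R.hasFDerivAt (x := z)).clm_apply (hasFDerivAt_id z)
    have h0 : HasFDerivAt (fun z => c + L (z - a) + Q (z - a) (z - a) + R z z) _ z :=
      ((hL.const_add c).add hQ).add hR
    refine h0.congr_fderiv ?_
    ext x
    rfl
  have h2 : HasFDerivAt (fun z => L + (Q (z - a) + Q.flip (z - a)) + (R z + R.flip z))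
      ((Q + Q.flip) + (R + R.flip)) a := by
    have hs : HasFDerivAt (fun z : Z => z - a) (ContinuousLinearMap.id ℝ Z) a :=
      (hasFDerivAt_id a).sub_const a
    have hQ : HasFDerivAt (fun z => Q (z - a)) _ a :=
      HasFDerivAt.comp (g := Q) a (Q.hasFDerivAt (x := a - a)) hs
    have hQ' : HasFDerivAt (fun z => Q.flip (z - a)) _ a :=
      HasFDerivAt.comp (g := Q.flip) a (Q.flip.hasFDerivAt (x := a - a)) hs
    have hR := (R.hasFDerivAt (x := a))
    have hR' := (R.flip.hasFDerivAt (x := a))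
    have h0 : HasFDerivAt (fun z => L + (Q (z - a) + Q.flip (z - a)) + (R z + R.flip z)) _ a :=
      ((hQ.add hQ').const_add L).add (hR.add hR')
    refine h0.congr_fderiv ?_
    ext x y
    rfl
  rw [iteratedFDeriv_two_apply, h1, h2.fderiv]
  simp

lemma hess_quad_matrix_aux {n : ℕ} (c : ℝ) (L : (Fin n → ℂ) →L[ℝ] ℝ)
    (Q : (Fin n → ℂ) →L[ℝ] (Fin n → ℂ) →L[ℝ] ℝ) (κ r : ℝ) (a : Fin n → ℂ) :
    complexHessian (fun z => c + L (z - a) + (Q + κ • SB n) (z - a) (z - a) + (r • SB n) z z) a =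
      hessM Q + ((κ + r : ℝ) : ℂ) • (1 : Matrix (Fin n) (Fin n) ℂ) := by
  ext j k
  rw [Matrix.add_apply, Matrix.smul_apply]
  unfold complexHessian hessM
  rw [hess_quad_aux, hess_quad_aux, hess_quad_aux, hess_quad_aux]
  simp only [ContinuousLinearMap.add_apply, ContinuousLinearMap.smul_apply, smul_eq_mul]
  have hS : ∀ x y : ℂ, SB n (Pi.single j x) (Pi.single k y) = if j = k then inner ℝ x y else 0 := by
    intro x y
    rw [SB_apply]
    rw [Finset.sum_eq_single j]
    · by_cases h : j = k
      · subst h; simp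
      · simp [h]
    · intro b _ hb
      simp [Pi.single_eq_of_ne hb]
    · simp
  have hS' : ∀ x y : ℂ, SB n (Pi.single k x) (Pi.single j y) =
    if j = k then inner ℝ y x else 0 := fun x y => by rw [SB_symm, hS]
  simp only [hS, hS']
  by_cases h : j = k
  · subst h
    simp [Complex.inner]
    ring
  · simp [h]

lemma test_fun_aux {n : ℕ} (c : ℝ) (ℓ : ℝ × (Fin n → ℂ) →L[ℝ] ℝ)
    (A : ℝ × (Fin n → ℂ) →L[ℝ] ℝ × (Fin n → ℂ) →L[ℝ] ℝ) (κ r η T : ℝ) (a : ℝ × (Fin n → ℂ))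
    (ha : a.1 < T) (q : ℝ × (Fin n → ℂ) → ℝ)
    (hq : q = fun p => c + ℓ (p - a) + 1 / 2 * A (p - a) (p - a) +
      κ * ((p.1 - a.1) ^ 2 + SB n (p.2 - a.2) (p.2 - a.2)) + r * SB n p.2 p.2 + η / (T - p.1)) :
    (∀ᶠ p in 𝓝 a, DifferentiableAt ℝ (fun t => q (t, p.2)) p.1 ∧
      ContDiffAt ℝ 2 (fun z => q (p.1, z)) p.2) ∧
    deriv (fun t => q (t, a.2)) a.1 = ℓ (1, 0) + η / (T - a.1) ^ 2 ∧
    complexHessian (fun z => q (a.1, z)) a.2 =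
      hessM ((1 / 2 : ℝ) • A.bilinearComp (ContinuousLinearMap.inr ℝ ℝ (Fin n → ℂ))
        (ContinuousLinearMap.inr ℝ ℝ (Fin n → ℂ))) +
        ((κ + r : ℝ) : ℂ) • (1 : Matrix (Fin n) (Fin n) ℂ) := by
  subst hq
  refine ⟨?_, ?_, ?_⟩
  · have h1 : ∀ᶠ p : ℝ × (Fin n → ℂ) in 𝓝 a, p.1 < T :=
      (isOpen_lt continuous_fst continuous_const).mem_nhds ha
    filter_upwards [h1] with p hp
    have hne : T - p.1 ≠ 0 := by linarith
    constructor
    · have : DifferentiableAt ℝ (fun t : ℝ => η / (T - t)) p.1 := by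
        fun_prop (disch := exact hne)
      refine DifferentiableAt.add ?_ this
      fun_prop
    · apply ContDiff.contDiffAt
      fun_prop
  · have hs : HasDerivAt (fun t : ℝ => t - a.1) 1 a.1 := (hasDerivAt_id _).sub_const _
    have h1 : ∀ t : ℝ, ((t, a.2) : ℝ × (Fin n → ℂ)) - a = (t - a.1) • ((1, 0) : ℝ × (Fin n → ℂ)) := by
      intro t; ext <;> simp
    have h2 : HasDerivAt (fun t : ℝ => η / (T - t)) (η / (T - a.1) ^ 2) a.1 := by
      have := ((hasDerivAt_id a.1).const_sub T).inv (by simp only [id]; linarith)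
      have := this.const_mul η
      refine (HasDerivAt.congr_deriv (f := fun t : ℝ => η / (T - t)) this ?_)
      simp only [id]; ring
    have h3 : HasDerivAt (fun t : ℝ => (c + (t - a.1) * ℓ (1, 0)
        + 1 / 2 * ((t - a.1) * ((t - a.1) * A (1, 0) (1, 0))) +
        κ * ((t - a.1) ^ 2 + SB n (a.2 - a.2) (a.2 - a.2)) + r * SB n a.2 a.2) + η / (T - t))
        (ℓ (1, 0) + η / (T - a.1) ^ 2) a.1 := by
      refine HasDerivAt.add ?_ h2
      have e1 := (hs.mul_const (ℓ (1, 0))).const_add c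
      have e2 := (hs.mul (hs.mul_const (A (1, 0) (1, 0)))).const_mul (1 / 2)
      have e3 := ((hs.pow 2).add_const (SB n (a.2 - a.2) (a.2 - a.2))).const_mul κ
      refine HasDerivAt.congr_deriv (((e1.add e2).add e3).add_const (r * SB n a.2 a.2)) ?_
      rw [sub_self]; ring
    have h4 := h3.deriv
    rw [← h4]
    congr 1
    funext t
    simp only [h1, map_smul, smul_eq_mul, ContinuousLinearMap.smul_apply]
  · rw [← hess_quad_matrix_aux (c + η / (T - a.1)) (ℓ.comp (ContinuousLinearMap.inr ℝ ℝ (Fin n → ℂ)))]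
    congr 1
    funext z
    have h1 : ((a.1, z) : ℝ × (Fin n → ℂ)) - a = (0, z - a.2) := by ext <;> simp
    simp only [h1, ContinuousLinearMap.add_apply, ContinuousLinearMap.smul_apply, smul_eq_mul,
      ContinuousLinearMap.bilinearComp_apply, ContinuousLinearMap.comp_apply,
      ContinuousLinearMap.inr_apply]
    ring

/-- The doubling quadratic form. -/
noncomputable def BB (n : ℕ) (K j : ℝ) :
    ℝ × (Fin n → ℂ) →L[ℝ] ℝ × (Fin n → ℂ) →L[ℝ] ℝ :=
  K • (ContinuousLinearMap.mul ℝ ℝ).bilinearComp (ContinuousLinearMap.fst ℝ ℝ (Fin n → ℂ))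
    (ContinuousLinearMap.fst ℝ ℝ (Fin n → ℂ)) +
  j • (SB n).bilinearComp (ContinuousLinearMap.snd ℝ ℝ (Fin n → ℂ))
    (ContinuousLinearMap.snd ℝ ℝ (Fin n → ℂ))

lemma BB_apply {n : ℕ} (K j : ℝ) (x y : ℝ × (Fin n → ℂ)) :
    BB n K j x y = K * (x.1 * y.1) + j * SB n x.2 y.2 := by
  simp [BB]

lemma norm_sq_le_prod_aux {n : ℕ} (h : ℝ × (Fin n → ℂ)) :
    ‖h‖ ^ 2 ≤ h.1 ^ 2 + SB n h.2 h.2 := by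
  have h1 := norm_sq_le_SB h.2
  have h2 := SB_self_nonneg h.2
  rw [Prod.norm_def]
  rcases max_cases ‖h.1‖ ‖h.2‖ with ⟨e, -⟩ | ⟨e, -⟩
  · rw [e, Real.norm_eq_abs, sq_abs]; linarith
  · rw [e]; nlinarith [sq_nonneg h.1]

lemma eigenvalues_shift_aux {n : ℕ} {H : Matrix (Fin n) (Fin n) ℂ} (h : H.IsHermitian) (c : ℝ)
    (h' : (H + (c : ℂ) • (1 : Matrix (Fin n) (Fin n) ℂ)).IsHermitian) :
    h'.eigenvalues = fun i => h.eigenvalues i + c := by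
  have hroots : (H + (c : ℂ) • (1 : Matrix (Fin n) (Fin n) ℂ)).charpoly.roots =
      Multiset.map (fun i => ((h.eigenvalues₀ i + c : ℝ) : ℂ)) Finset.univ.val := by
    have e1 : H + (c : ℂ) • (1 : Matrix (Fin n) (Fin n) ℂ) =
        H - Matrix.scalar (Fin n) (-(c : ℂ)) := by
      rw [map_neg, sub_neg_eq_add, Matrix.scalar_apply, Matrix.smul_one_eq_diagonal]
    have e0 : H.charpoly = (Multiset.map
        (fun i => Polynomial.X - Polynomial.C ((h.eigenvalues₀ i : ℝ) : ℂ)) Finset.univ.val).prod := by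
      have e2 := h.splits_charpoly.eq_prod_roots_of_monic (Matrix.charpoly_monic H)
      rw [h.roots_charpoly_eq_eigenvalues₀, Multiset.map_map] at e2
      exact e2
    rw [e1, Matrix.charpoly_sub_scalar, e0]
    rw [Polynomial.multiset_prod_comp, Multiset.map_map]
    have : (fun p : Polynomial ℂ => p.comp (Polynomial.X + Polynomial.C (-(c : ℂ)))) ∘
      (fun i => Polynomial.X - Polynomial.C ((h.eigenvalues₀ i : ℝ) : ℂ)) =
      (fun a : ℂ => Polynomial.X - Polynomial.C a) ∘
        fun i => ((h.eigenvalues₀ i + c : ℝ) : ℂ) := by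
      funext i
      simp
      ring
    rw [this, ← Multiset.map_map, Polynomial.roots_multiset_prod_X_sub_C]
  have h0 : h'.eigenvalues₀ = fun i => h.eigenvalues₀ i + c := by
    rw [← List.ofFn_inj, ← h'.sort_roots_charpoly_eq_eigenvalues₀, hroots]
    rw [Multiset.map_map, Fin.univ_val_map, Multiset.coe_sort]
    have e3 : (⇑(RCLike.re : ℂ →+ ℝ) ∘ fun i => ((h.eigenvalues₀ i + c : ℝ) : ℂ)) =
        fun i => h.eigenvalues₀ i + c := by
      funext i
      simp
    rw [e3]
    apply List.mergeSort_of_pairwise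
    simp_rw [decide_eq_true_eq, ← List.sortedGE_iff_pairwise]
    refine Antitone.sortedGE_ofFn (fun i j hij => ?_)
    have := h.eigenvalues₀_antitone hij
    simpa using this
  unfold Matrix.IsHermitian.eigenvalues
  rw [h0]

lemma const_mem_gamma_aux {n : ℕ} {R : ℝ} (hR : 0 < R) : (fun _ : Fin n => R) ∈ GammaK n n := by
  intro l _ hl
  unfold esym
  refine Finset.sum_pos (fun s _ => Finset.prod_pos fun _ _ => hR) ?_
  rw [Finset.powersetCard_nonempty]
  simpa using hl

lemma closure_add_aux {n : ℕ} {Γ : Set (Fin n → ℝ)} (hΓ : IsGammaCone n Γ)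
    {x y : Fin n → ℝ} (hx : x ∈ closure Γ) (hy : y ∈ closure Γ) {a b : ℝ} (ha : 0 < a)
    (hb : 0 < b) : a • x + b • y ∈ closure Γ := by
  obtain ⟨-, hc, hs, -⟩ := hΓ
  have hs' : ∀ x ∈ closure Γ, ∀ t : ℝ, 0 < t → t • x ∈ closure Γ := by
    intro x hx t ht
    exact map_mem_closure (continuous_const_smul t) hx (fun z hz => hs z hz t ht)
  have h1 := hc.closure hx hy (a := a / (a + b)) (b := b / (a + b)) (by positivity) (by positivity)
    (by field_simp)
  have h2 := hs' _ h1 (a + b) (by positivity)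
  convert h2 using 1
  rw [smul_add, smul_smul, smul_smul]
  congr 2 <;> field_simp

lemma f_lower_aux {n : ℕ} (hn : 1 ≤ n) {Γ : Set (Fin n → ℝ)} {f : (Fin n → ℝ) → ℝ}
    (hΓ : IsGammaCone n Γ) (hf : IsHessianDensity n Γ f) {R : ℝ} (hR : 0 < R) :
    0 < f (fun _ => R) := by
  have hR1 : ∀ R : ℝ, 0 < R → (fun _ : Fin n => R) ∈ closure Γ := fun R hR =>
    subset_closure (hΓ.2.2.2.2.2.1 (const_mem_gamma_aux hR))
  have h1 := hf.2.2.2.1 (fun _ => R / 2) (hR1 _ (by positivity)) (fun _ => R) (hR1 _ hR)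
    (fun _ => by linarith) (fun h => by
      have := congrFun h ⟨0, hn⟩
      change R / 2 = R at this
      linarith)
  exact lt_of_le_of_lt (hf.1 _ (hR1 _ (by positivity))) h1

lemma f_shift_aux {n : ℕ} {Γ : Set (Fin n → ℝ)} {f : (Fin n → ℝ) → ℝ}
    (hΓ : IsGammaCone n Γ) (hf : IsHessianDensity n Γ f) {c δ : ℝ} (hc : 0 < c) (hδ : 0 < δ)
    (hδ1 : δ < 1) {x : Fin n → ℝ} (hx : x ∈ closure Γ) :
    (fun i => x i + c) ∈ closure Γ ∧
    (1 - δ) * f x + δ * (1 / 2 * f (fun _ => 2 * c / δ)) ≤ f (fun i => x i + c) := by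
  have hR1 : ∀ R : ℝ, 0 < R → (fun _ : Fin n => R) ∈ closure Γ := fun R hR =>
    subset_closure (hΓ.2.2.2.2.2.1 (const_mem_gamma_aux hR))
  have hm : ∀ R : ℝ, 0 < R → (fun i => x i + R) ∈ closure Γ := fun R hR => by
    have := closure_add_aux hΓ hx (hR1 R hR) one_pos one_pos
    convert this using 1
    funext i; simp
  refine ⟨hm c hc, ?_⟩
  have hcd : 0 < c / δ := by positivity
  have h2x : (2 : ℝ) • x ∈ closure Γ := by
    have := closure_add_aux hΓ hx hx one_pos one_pos
    convert this using 1
    rw [two_smul, one_smul]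
  have k1 := hf.2.2.1.2 hx (hm (c / δ) hcd) (by linarith : 0 ≤ 1 - δ) hδ.le (by ring)
  have k2 := hf.2.2.1.2 h2x (hR1 (2 * c / δ) (by positivity)) (by norm_num : (0 : ℝ) ≤ 1 / 2)
    (by norm_num : (0 : ℝ) ≤ 1 / 2) (by norm_num)
  have e1 : (1 - δ) • x + δ • (fun i => x i + c / δ) = fun i => x i + c := by
    funext i
    simp only [Pi.add_apply, Pi.smul_apply, smul_eq_mul]
    field_simp
    ring
  have e2 : (1 / 2 : ℝ) • (2 : ℝ) • x + (1 / 2 : ℝ) • (fun _ => 2 * c / δ) =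
      fun i => x i + c / δ := by
    funext i
    simp only [Pi.add_apply, Pi.smul_apply, smul_eq_mul]
    ring
  rw [e1] at k1
  rw [e2] at k2
  simp only [smul_eq_mul] at k1 k2
  have k3 := hf.1 _ h2x
  nlinarith [mul_le_mul_of_nonneg_left k2 hδ.le, mul_nonneg hδ.le k3]

lemma Fop_shift_aux {n : ℕ} {Γ : Set (Fin n → ℝ)} {f : (Fin n → ℝ) → ℝ}
    (hΓ : IsGammaCone n Γ) (hf : IsHessianDensity n Γ f) {c δ : ℝ} (hc : 0 < c) (hδ : 0 < δ)
    (hδ1 : δ < 1) {H : Matrix (Fin n) (Fin n) ℂ} {x y : ℝ} (hx : (x : EReal) ≤ Fop f Γ H)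
    (hy : Fop f Γ (H + (c : ℂ) • (1 : Matrix (Fin n) (Fin n) ℂ)) ≤ (y : EReal)) :
    (1 - δ) * x + δ * (1 / 2 * f (fun _ => 2 * c / δ)) ≤ y := by
  unfold Fop at hx
  split_ifs at hx with h1 h2
  · have h' : (H + (c : ℂ) • (1 : Matrix (Fin n) (Fin n) ℂ)).IsHermitian := by
      refine h1.add ?_
      rw [Matrix.IsHermitian, Matrix.conjTranspose_smul, Matrix.conjTranspose_one]
      simp
    have hs := f_shift_aux hΓ hf hc hδ hδ1 h2
    unfold Fop at hy
    rw [dif_pos h', eigenvalues_shift_aux h1 c h', if_pos hs.1, EReal.coe_le_coe_iff] at hy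
    rw [EReal.coe_le_coe_iff] at hx
    have := mul_le_mul_of_nonneg_left hx (by linarith : 0 ≤ 1 - δ)
    linarith [hs.2]
  · exact absurd hx (by simp)
  · exact absurd hx (by simp)

lemma compact_super_aux {X : Type*} [TopologicalSpace X] {D : Set X} (hD : IsCompact D) {w : X → ℝ}
    (hw : UpperSemicontinuousOn w D) (m : ℝ) : IsCompact {p | p ∈ D ∧ m ≤ w p} := by
  obtain ⟨V, hV, hVe⟩ := (upperSemicontinuousOn_iff_preimage_Ici.mp hw) m
  have : {p | p ∈ D ∧ m ≤ w p} = D ∩ V := by rw [← hVe]; rfl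
  rw [this]
  exact hD.inter_right hV

lemma near_diag_aux {X : Type*} [MetricSpace X] {Q : Set (X × X)} (hQ : IsCompact Q)
    {I : Set X} (hI : IsOpen I) (hd : ∀ d, (d, d) ∈ Q → d ∈ I) :
    ∃ ρ > 0, ∀ p ∈ Q, dist p.1 p.2 ≤ ρ → p.1 ∈ I ∧ p.2 ∈ I := by
  have hQ' : IsCompact (Q \ (I ×ˢ I)) := hQ.diff (hI.prod hI)
  rcases (Q \ (I ×ˢ I)).eq_empty_or_nonempty with he | hne
  · refine ⟨1, one_pos, fun p hp _ => ?_⟩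
    by_contra hcon
    have : p ∈ Q \ (I ×ˢ I) := ⟨hp, fun h => hcon ⟨h.1, h.2⟩⟩
    rw [he] at this
    exact this
  · obtain ⟨p, hp, hmin⟩ := hQ'.exists_isMinOn hne (continuous_dist.continuousOn)
    have hpos : 0 < dist p.1 p.2 := by
      rw [dist_pos]
      intro h
      have h1 : (p.1, p.1) ∈ Q := by
        have := hp.1
        rwa [← Prod.mk.eta (p := p), ← h] at this
      have h2 := hd _ h1
      exact hp.2 ⟨h2, h ▸ h2⟩
    refine ⟨dist p.1 p.2 / 2, by positivity, fun q hq hdq => ?_⟩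
    by_contra hcon
    have h3 : q ∈ Q \ (I ×ˢ I) := ⟨hq, fun h => hcon ⟨h.1, h.2⟩⟩
    have h4 : dist p.1 p.2 ≤ dist q.1 q.2 := hmin h3
    linarith

lemma small_aux {K C ρ x : ℝ} (hρ : 0 < ρ) (hC : 0 < C) (hK : K = 2 * C / ρ ^ 2 + 1)
    (h : K * x ^ 2 ≤ 2 * C) : |x| < ρ := by
  by_contra hcon
  push Not at hcon
  have h1 : ρ ^ 2 ≤ x ^ 2 := by rw [← sq_abs x]; gcongr
  have h2 : K * ρ ^ 2 = 2 * C + ρ ^ 2 := by rw [hK]; field_simp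
  have hK0 : 0 < K := by rw [hK]; positivity
  have h3 := mul_le_mul_of_nonneg_left h1 hK0.le
  nlinarith [pow_pos hρ 2]

lemma touching_aux {n : ℕ} {Γ : Set (Fin n → ℝ)} {f : (Fin n → ℝ) → ℝ}
    (hΓ : IsGammaCone n Γ) (hf : IsHessianDensity n Γ f)
    {Ω : Set (Fin n → ℂ)} (hΩo : IsOpen Ω) {T T' : ℝ} (hT' : T' < T)
    {G : ℝ → (Fin n → ℂ) → ℝ → ℝ} {g : (Fin n → ℂ) → ℝ} {u v : ℝ × (Fin n → ℂ) → ℝ}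
    (hsub : ParSubsolOn f Γ G g (Set.Ioo 0 T ×ˢ Ω) u)
    (hsup : ParSupersolOn f Γ G g (Set.Ioo 0 T ×ˢ Ω) v)
    {ε η : ℝ} (hε : 0 < ε) {a b : ℝ × (Fin n → ℂ)}
    (ha : a ∈ Set.Ioo 0 T' ×ˢ Ω) (hb : b ∈ Set.Ioo 0 T' ×ˢ Ω)
    (u' : ℝ × (Fin n → ℂ) → ℝ) (hu' : u' = fun p => u p + (ε * SB n p.2 p.2 + -(η / (T - p.1))))
    (ℓ₁ ℓ₂ : ℝ × (Fin n → ℂ) →L[ℝ] ℝ)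
    (A : ℝ × (Fin n → ℂ) →L[ℝ] ℝ × (Fin n → ℂ) →L[ℝ] ℝ)
    (h1 : ∀ κ > 0, ∀ᶠ h in 𝓝 (0 : ℝ × (Fin n → ℂ)), a + h ∈ Set.Icc 0 T' ×ˢ closure Ω →
        u' (a + h) ≤ u' a + ℓ₁ h + (1 / 2) * A h h + κ * ‖h‖ ^ 2)
    (h2 : ∀ κ > 0, ∀ᶠ h in 𝓝 (0 : ℝ × (Fin n → ℂ)), b + h ∈ Set.Icc 0 T' ×ˢ closure Ω →
        v b + ℓ₂ h + (1 / 2) * A h h - κ * ‖h‖ ^ 2 ≤ v (b + h))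
    {δ : ℝ} (hδ : 0 < δ) (hδ1 : δ < 1) :
    (1 - δ) * (Real.exp (ℓ₁ (1, 0) + η / (T - a.1) ^ 2 + G a.1 a.2 (u a)) * g a.2)
      + δ * (1 / 2 * f (fun _ => 2 * (ε / 2) / δ)) ≤
      Real.exp (ℓ₂ (1, 0) + G b.1 b.2 (v b)) * g b.2 := by
  have hopen : IsOpen (Set.Ioo 0 T' ×ˢ Ω) := isOpen_Ioo.prod hΩo
  have hsubs : Set.Ioo 0 T' ×ˢ Ω ⊆ Set.Icc 0 T' ×ˢ closure Ω :=
    prod_mono Ioo_subset_Icc_self subset_closure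
  have htr : ∀ a : ℝ × (Fin n → ℂ), Tendsto (fun p => p - a) (𝓝 a) (𝓝 0) := by
    intro a
    have : Continuous fun p : ℝ × (Fin n → ℂ) => p - a := by fun_prop
    simpa using this.tendsto a
  have haT : a.1 < T := ha.1.2.trans hT'
  have hbT : b.1 < T := hb.1.2.trans hT'
  have hε4 : 0 < ε / 4 := by positivity
  obtain ⟨q1, hq1⟩ : ∃ q : ℝ × (Fin n → ℂ) → ℝ, q = fun p => u' a + ℓ₁ (p - a) +
      1 / 2 * A (p - a) (p - a) + (ε / 4) * ((p.1 - a.1) ^ 2 + SB n (p.2 - a.2) (p.2 - a.2)) +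
      (-ε) * SB n p.2 p.2 + η / (T - p.1) := ⟨_, rfl⟩
  obtain ⟨q2, hq2⟩ : ∃ q : ℝ × (Fin n → ℂ) → ℝ, q = fun p => v b + ℓ₂ (p - b) +
      1 / 2 * A (p - b) (p - b) + (-(ε / 4)) * ((p.1 - b.1) ^ 2 + SB n (p.2 - b.2) (p.2 - b.2)) +
      0 * SB n p.2 p.2 + 0 / (T - p.1) := ⟨_, rfl⟩
  obtain ⟨d1, t1, m1⟩ := test_fun_aux (u' a) ℓ₁ A (ε / 4) (-ε) η T a haT q1 hq1
  obtain ⟨d2, t2, m2⟩ := test_fun_aux (v b) ℓ₂ A (-(ε / 4)) 0 0 T b hbT q2 hq2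
  have v1 : q1 a = u a := by simp [hq1, hu']; ring
  have v2 : q2 b = v b := by simp [hq2]
  have k1 := hsub.2 a ⟨⟨ha.1.1, haT⟩, ha.2⟩ q1 ⟨v1, by
    filter_upwards [hopen.mem_nhds ha, (htr a).eventually (h1 (ε / 4) hε4)] with p hp hq
    rw [add_sub_cancel] at hq
    have := hq (hsubs hp)
    have h3 := mul_le_mul_of_nonneg_left (norm_sq_le_prod_aux (p - a)) hε4.le
    simp only [Prod.fst_sub, Prod.snd_sub] at h3
    have h4 : u' p = u p + (ε * SB n p.2 p.2 + -(η / (T - p.1))) := by rw [hu']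
    simp only [hq1]
    linarith, d1⟩
  have k2 := hsup.2 b ⟨⟨hb.1.1, hbT⟩, hb.2⟩ q2 ⟨v2, by
    filter_upwards [hopen.mem_nhds hb, (htr b).eventually (h2 (ε / 4) hε4)] with p hp hq
    rw [add_sub_cancel] at hq
    have := hq (hsubs hp)
    have h3 := mul_le_mul_of_nonneg_left (norm_sq_le_prod_aux (p - b)) hε4.le
    simp only [Prod.fst_sub, Prod.snd_sub] at h3
    simp only [hq2, zero_div, zero_mul, add_zero]
    linarith, d2⟩
  rw [t1, m1, v1] at k1
  rw [t2, m2, v2] at k2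
  have em : ∀ X : Matrix (Fin n) (Fin n) ℂ,
      X + ((-(ε / 4) + 0 : ℝ) : ℂ) • (1 : Matrix (Fin n) (Fin n) ℂ) =
      (X + ((ε / 4 + -ε : ℝ) : ℂ) • (1 : Matrix (Fin n) (Fin n) ℂ)) +
        ((ε / 2 : ℝ) : ℂ) • (1 : Matrix (Fin n) (Fin n) ℂ) := by
    intro X
    rw [add_assoc, ← add_smul, ← Complex.ofReal_add]
    congr 3
    ring
  rw [em] at k2
  have k3 := Fop_shift_aux hΓ hf (by positivity : 0 < ε / 2) hδ hδ1 k1 k2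
  rwa [zero_div, add_zero] at k3

lemma BB_one_zero_sub {n : ℕ} (K j : ℝ) (a b e : ℝ × (Fin n → ℂ)) :
    BB n K j (a - b - (2 : ℝ) • e) (1, 0) = K * (a.1 - b.1 - 2 * e.1) := by
  rw [BB_apply, Prod.fst_sub, Prod.fst_sub, Prod.smul_fst, map_zero, smul_eq_mul]
  ring

lemma BB_one_zero_add {n : ℕ} (K j : ℝ) (a b e : ℝ × (Fin n → ℂ)) :
    BB n K j (a - b + (2 : ℝ) • e) (1, 0) = K * (a.1 - b.1 + 2 * e.1) := by
  rw [BB_apply, Prod.fst_add, Prod.fst_sub, Prod.smul_fst, map_zero, smul_eq_mul]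
  ring

set_option maxHeartbeats 4000000


/-- the comparison principle. -/
theorem stmt15
    {n : ℕ} (hn : 1 ≤ n) (Γ : Set (Fin n → ℝ)) (f : (Fin n → ℝ) → ℝ)
    (hΓ : IsGammaCone n Γ) (hf : IsHessianDensity n Γ f)
    (Ω : Set (Fin n → ℂ)) (hΩo : IsOpen Ω) (hΩb : Bornology.IsBounded Ω)
    (hΩc : IsConnected Ω) (T : ℝ) (hT : 0 < T)
    (G : ℝ → (Fin n → ℂ) → ℝ → ℝ)
    (hGc : ContinuousOn (fun p : ℝ × (Fin n → ℂ) × ℝ => G p.1 p.2.1 p.2.2)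
      (Set.Icc 0 T ×ˢ closure Ω ×ˢ Set.univ))
    (hGm : ∀ t z, Monotone (fun r => G t z r))
    (g : (Fin n → ℂ) → ℝ) (hgc : ContinuousOn g Ω)
    (hg0 : ∀ z ∈ Ω, 0 ≤ g z) (hgb : ∃ C, ∀ z ∈ Ω, g z ≤ C)
    (hflim : Filter.Tendsto (fun R : ℝ => f (fun _ => R)) Filter.atTop Filter.atTop)
    (u v : ℝ × (Fin n → ℂ) → ℝ)
    (husc : UpperSemicontinuousOn u (Set.Ico 0 T ×ˢ closure Ω))
    (hub : ∃ C, ∀ p ∈ Set.Ico 0 T ×ˢ closure Ω, |u p| ≤ C)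
    (hvlsc : LowerSemicontinuousOn v (Set.Ico 0 T ×ˢ closure Ω))
    (hvb : ∃ C, ∀ p ∈ Set.Ico 0 T ×ˢ closure Ω, |v p| ≤ C)
    (hsub : ParSubsolOn f Γ G g (Set.Ioo 0 T ×ˢ Ω) u)
    (hsup : ParSupersolOn f Γ G g (Set.Ioo 0 T ×ˢ Ω) v) :
    ∀ p ∈ Set.Ioo 0 T ×ˢ Ω,
      u p - v p ≤ sSup ((fun q => max (u q - v q) 0) ''
        ((({0} : Set ℝ) ×ˢ closure Ω) ∪ (Set.Ioo 0 T ×ˢ frontier Ω))) := by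
  intro p0 hp0
  by_contra hcon
  push Not at hcon
  obtain ⟨Cu, hCu⟩ := hub
  obtain ⟨Cv, hCv⟩ := hvb
  set M : ℝ := sSup ((fun q => max (u q - v q) 0) ''
        ((({0} : Set ℝ) ×ˢ closure Ω) ∪ (Set.Ioo 0 T ×ˢ frontier Ω))) with hM
  have hM0 : 0 ≤ M := by
    apply Real.sSup_nonneg
    rintro _ ⟨q, -, rfl⟩
    exact le_max_right _ _
  have hp0' : p0 ∈ Set.Ico 0 T ×ˢ closure Ω :=
    ⟨⟨hp0.1.1.le, hp0.1.2⟩, subset_closure hp0.2⟩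
  have hCu0 : 0 ≤ Cu := (abs_nonneg _).trans (hCu p0 hp0')
  have hCv0 : 0 ≤ Cv := (abs_nonneg _).trans (hCv p0 hp0')
  have hbdsub : ((({0} : Set ℝ) ×ˢ closure Ω) ∪ (Set.Ioo 0 T ×ˢ frontier Ω)) ⊆
      Set.Ico 0 T ×ˢ closure Ω := by
    rintro q (⟨h1, h2⟩ | ⟨h1, h2⟩)
    · rw [Set.mem_singleton_iff] at h1
      exact ⟨⟨h1.ge, h1 ▸ hT⟩, h2⟩
    · exact ⟨⟨h1.1.le, h1.2⟩, frontier_subset_closure h2⟩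
  have hbd : ∀ q ∈ ((({0} : Set ℝ) ×ˢ closure Ω) ∪ (Set.Ioo 0 T ×ˢ frontier Ω)),
      u q - v q ≤ M := by
    intro q hq
    refine (le_max_left _ 0).trans (le_csSup ⟨Cu + Cv, ?_⟩ ⟨q, hq, rfl⟩)
    rintro _ ⟨q, hq, rfl⟩
    have h1 := abs_le.mp (hCu q (hbdsub hq))
    have h2 := abs_le.mp (hCv q (hbdsub hq))
    exact max_le (by linarith) (by linarith)
  set θ : ℝ := u p0 - v p0 - M with hθ
  have hθ0 : 0 < θ := by linarith
  have hΩcpt : IsCompact (closure Ω) :=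
    Metric.isCompact_of_isClosed_isBounded isClosed_closure hΩb.closure
  obtain ⟨R, hR0, hR⟩ : ∃ R : ℝ, 0 < R ∧ ∀ z ∈ closure Ω, SB n z z ≤ R := by
    have hc : Continuous fun z : Fin n → ℂ => SB n z z := by fun_prop
    obtain ⟨R, hR⟩ := (hΩcpt.image hc).bddAbove
    exact ⟨max R 1, by positivity, fun z hz => (hR ⟨z, hz, rfl⟩).trans (le_max_left _ _)⟩
  set ε : ℝ := θ / (4 * R) with hε
  have hε0 : 0 < ε := by positivity
  have hεR : ∀ z ∈ closure Ω, ε * SB n z z ≤ θ / 4 := by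
    intro z hz
    calc ε * SB n z z ≤ ε * R := by gcongr; exact hR z hz
      _ = θ / 4 := by rw [hε]; field_simp
  have hTt : 0 < T - p0.1 := by linarith [hp0.1.2]
  set η : ℝ := θ * (T - p0.1) / 4 with hη
  have hη0 : 0 < η := by positivity
  have hη1 : η / (T - p0.1) = θ / 4 := by rw [hη]; field_simp
  set N : ℝ := Cu + Cv + θ + 1 with hN
  have hN0 : 0 < N := by positivity
  obtain ⟨T', hT't, hT'T, hT'N⟩ : ∃ T' : ℝ, p0.1 < T' ∧ T' < T ∧ N ≤ η / (T - T') := by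
    refine ⟨max ((p0.1 + T) / 2) (T - η / N), ?_, ?_, ?_⟩
    · exact lt_max_of_lt_left (by linarith)
    · have : 0 < η / N := by positivity
      exact max_lt (by linarith) (by linarith)
    · have hpos : 0 < η / N := by positivity
      have h1 : max ((p0.1 + T) / 2) (T - η / N) < T := max_lt (by linarith) (by linarith)
      have h2 := le_max_right ((p0.1 + T) / 2) (T - η / N)
      rw [le_div_iff₀ (by linarith)]
      have h3 : T - max ((p0.1 + T) / 2) (T - η / N) ≤ η / N := by linarith
      rw [le_div_iff₀ hN0] at h3
      linarith
  have hT'0 : 0 < T' := hp0.1.1.trans hT't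
  set D : Set (ℝ × (Fin n → ℂ)) := Set.Icc 0 T' ×ˢ closure Ω with hD
  have hDc : IsCompact D := isCompact_Icc.prod hΩcpt
  have hDsub : D ⊆ Set.Ico 0 T ×ˢ closure Ω := by
    rintro q ⟨h1, h2⟩
    exact ⟨⟨h1.1, h1.2.trans_lt hT'T⟩, h2⟩
  have hp0D : p0 ∈ D := ⟨⟨hp0.1.1.le, hT't.le⟩, subset_closure hp0.2⟩
  obtain ⟨u', hu'⟩ : ∃ u' : ℝ × (Fin n → ℂ) → ℝ,
      u' = fun p => u p + (ε * SB n p.2 p.2 + -(η / (T - p.1))) := ⟨_, rfl⟩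
  have hu'usc : UpperSemicontinuousOn u' D := by
    rw [hu']
    refine (husc.mono hDsub).add (ContinuousOn.upperSemicontinuousOn ?_)
    have h1 : ContinuousOn (fun p : ℝ × (Fin n → ℂ) => η / (T - p.1)) D := by
      refine ContinuousOn.div (by fun_prop) (by fun_prop) ?_
      intro q hq
      have := (hDsub hq).1.2
      linarith
    refine ContinuousOn.add ?_ h1.neg
    fun_prop
  have hvlsc' : LowerSemicontinuousOn v D := hvlsc.mono hDsub
  have hηpos : ∀ d ∈ D, 0 ≤ η / (T - d.1) := by
    intro d hd
    have := (hDsub hd).1.2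
    have : 0 < T - d.1 := by linarith
    positivity
  have hu'le : ∀ d ∈ D, u' d ≤ u d + θ / 4 - η / (T - d.1) := by
    intro d hd
    have := hεR d.2 hd.2
    simp only [hu']
    linarith
  have hu'le' : ∀ d ∈ D, u' d ≤ u d + θ / 4 := by
    intro d hd
    linarith [hu'le d hd, hηpos d hd]
  have hu'p0 : M + 3 * θ / 4 ≤ u' p0 - v p0 := by
    have h1 := mul_nonneg hε0.le (SB_self_nonneg p0.2)
    simp only [hu']
    rw [hη1]
    linarith
  have hdiag : ∀ d ∈ D, M + θ / 2 ≤ u' d - v d → d ∈ Set.Ioo 0 T' ×ˢ Ω := by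
    intro d hd hm
    have h1 := hu'le' d hd
    have hcl := hd.2
    have hpos : 0 < d.1 := by
      rcases hd.1.1.eq_or_lt with h0 | h0
      · have := hbd d (Or.inl ⟨h0.symm, hd.2⟩)
        linarith
      · exact h0
    have hlt : d.1 < T' := by
      rcases hd.1.2.eq_or_lt with h0 | h0
      · have h2 := hu'le d hd
        rw [h0] at h2
        have h3 := abs_le.mp (hCu d (hDsub hd))
        have h4 := abs_le.mp (hCv d (hDsub hd))
        linarith
      · exact h0
    refine ⟨⟨hpos, hlt⟩, ?_⟩
    by_contra hcon2
    have hfr : d.2 ∈ frontier Ω := by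
      rw [hΩo.frontier_eq]; exact ⟨hcl, hcon2⟩
    have := hbd d (Or.inr ⟨⟨hpos, hlt.trans hT'T⟩, hfr⟩)
    linarith
  set Q : Set ((ℝ × (Fin n → ℂ)) × (ℝ × (Fin n → ℂ))) :=
    {p | p ∈ D ×ˢ D ∧ M + θ / 2 ≤ u' p.1 - v p.2} with hQ
  have hQc : IsCompact Q := compact_super_aux (hDc.prod hDc) (usc_pair_aux hu'usc hvlsc') _
  obtain ⟨ρ, hρ0, hρ⟩ := near_diag_aux hQc (isOpen_Ioo.prod hΩo : IsOpen (Set.Ioo 0 T' ×ˢ Ω))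
    (fun d hd => hdiag d hd.1.1 hd.2)
  -- compact set of relevant space points
  set Qρ : Set ((ℝ × (Fin n → ℂ)) × (ℝ × (Fin n → ℂ))) := Q ∩ {p | dist p.1 p.2 ≤ ρ} with hQρ
  have hQρc : IsCompact Qρ :=
    hQc.inter_right (isClosed_le (by fun_prop) (by fun_prop))
  set Z : Set (Fin n → ℂ) := (fun p => p.1.2) '' Qρ ∪ (fun p => p.2.2) '' Qρ with hZ
  have hZc : IsCompact Z := (hQρc.image (by fun_prop)).union (hQρc.image (by fun_prop))
  have hZΩ : Z ⊆ Ω := by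
    rintro z (⟨p, hp, rfl⟩ | ⟨p, hp, rfl⟩)
    · exact (hρ p hp.1 hp.2).1.2
    · exact (hρ p hp.1 hp.2).2.2
  have hgu := Metric.uniformContinuousOn_iff.mp
    (hZc.uniformContinuousOn_of_continuous (hgc.mono hZΩ))
  -- constants
  set η₂ : ℝ := η / T ^ 2 with hη₂
  have hη₂0 : 0 < η₂ := by positivity
  set δ : ℝ := 1 - Real.exp (-(η₂ / 2)) with hδ
  have hδ0 : 0 < δ := by
    have : Real.exp (-(η₂ / 2)) < 1 := by
      rw [Real.exp_lt_one_iff]; linarith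
    linarith
  have hδ1 : δ < 1 := by
    have := Real.exp_pos (-(η₂ / 2))
    linarith
  set m : ℝ := 1 / 2 * f (fun _ => 2 * (ε / 2) / δ) with hm
  have hm0 : 0 < m := by
    have := f_lower_aux hn hΓ hf (R := 2 * (ε / 2) / δ) (by positivity)
    positivity
  -- the function `G`
  have hGcpt : IsCompact (Set.Icc 0 T ×ˢ closure Ω ×ˢ Set.Icc (-Cv) Cv) :=
    isCompact_Icc.prod (hΩcpt.prod isCompact_Icc)
  have hGc' := hGc.mono (show Set.Icc 0 T ×ˢ closure Ω ×ˢ Set.Icc (-Cv) Cv ⊆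
    Set.Icc 0 T ×ˢ closure Ω ×ˢ Set.univ from
      prod_mono le_rfl (prod_mono le_rfl (subset_univ _)))
  obtain ⟨ρG, hρG0, hρG⟩ := Metric.uniformContinuousOn_iff.mp
    (hGcpt.uniformContinuousOn_of_continuous hGc') (η₂ / 4) (by positivity)
  obtain ⟨CG, hCG⟩ := hGcpt.exists_bound_of_continuousOn hGc'
  set C0 : ℝ := Cu + Cv + 1 with hC0
  have hC00 : 0 < C0 := by positivity
  set ρ1 : ℝ := min ρ ρG with hρ1
  have hρ10 : 0 < ρ1 := lt_min hρ0 hρG0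
  set K : ℝ := 2 * C0 / ρ1 ^ 2 + 1 with hK
  have hK0 : 0 < K := by positivity
  set E0 : ℝ := Real.exp (K * (T + 2) + CG) with hE0
  have hE00 : 0 < E0 := Real.exp_pos _
  set τ : ℝ := δ * m / (2 * E0) with hτ
  have hτ0 : 0 < τ := by positivity
  obtain ⟨ρg, hρg0, hρg⟩ := hgu τ hτ0
  set ρ2 : ℝ := min ρ1 ρg with hρ2
  have hρ20 : 0 < ρ2 := lt_min hρ10 hρg0
  set j : ℝ := 2 * C0 / ρ2 ^ 2 + 1 with hj
  have hj0 : 0 < j := by positivity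
  obtain ⟨Rd, hRd0, hRd⟩ : ∃ Rd : ℝ, 0 < Rd ∧ ∀ d ∈ D, ‖d‖ ≤ Rd := by
    obtain ⟨Rd, h0, h⟩ := hDc.isBounded.exists_pos_norm_le
    exact ⟨Rd, h0, h⟩
  set B := BB n K j with hB
  set r : ℝ := min 1 (min (θ / 4 / (8 * ‖B‖ * Rd + 1)) (η₂ / 4 / (4 * K))) with hr
  have hr0 : 0 < r := by
    refine lt_min one_pos (lt_min ?_ ?_) <;> positivity
  have hr1 : r ≤ 1 := min_le_left _ _
  have hr2 : 8 * ‖B‖ * Rd * r ≤ θ / 4 := by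
    have h1 : r ≤ θ / 4 / (8 * ‖B‖ * Rd + 1) := (min_le_right _ _).trans (min_le_left _ _)
    rw [le_div_iff₀ (by positivity)] at h1
    linarith
  have hr3 : 4 * K * r ≤ η₂ / 4 := by
    have h1 : r ≤ η₂ / 4 / (4 * K) := (min_le_right _ _).trans (min_le_right _ _)
    rw [le_div_iff₀ (by positivity)] at h1
    linarith
  obtain ⟨a, haD, b, hbD, e, her, A, hi, hii, hiii⟩ := jensen_ishii_aux D hDc ⟨p0, hp0D⟩ u' v
    hu'usc hvlsc' B (fun x y => by rw [hB, BB_apply, BB_apply, SB_symm]; ring) (min K j)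
    (lt_min hK0 hj0) (fun h => by
      have h1 := norm_sq_le_prod_aux h
      have h2 := SB_self_nonneg h.2
      rw [hB, BB_apply]
      calc min K j * ‖h‖ ^ 2 ≤ min K j * (h.1 ^ 2 + SB n h.2 h.2) := by
            gcongr
        _ = min K j * h.1 ^ 2 + min K j * SB n h.2 h.2 := by ring
        _ ≤ K * h.1 ^ 2 + j * SB n h.2 h.2 := by
            gcongr
            · exact min_le_left _ _
            · exact min_le_right _ _
        _ = _ := by ring) r hr0
  have hpert : ∀ x, ‖x‖ ≤ Rd → |B e x| ≤ ‖B‖ * r * Rd := by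
    intro x hx
    calc |B e x| ≤ ‖B‖ * ‖e‖ * ‖x‖ := B.le_opNorm₂ e x
      _ ≤ _ := by gcongr
  have hq1 := abs_le.mp (hpert p0 (hRd p0 hp0D))
  have hq2 := abs_le.mp (hpert a (hRd a haD))
  have hq3 := abs_le.mp (hpert b (hRd b hbD))
  have hi0 := hi p0 hp0D
  rw [map_add] at hi0
  have hBab : B (a - b) (a - b) = K * (a.1 - b.1) ^ 2 + j * SB n (a.2 - b.2) (a.2 - b.2) := by
    rw [hB, BB_apply]; simp only [Prod.fst_sub, Prod.snd_sub]; ring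
  have hS0 := SB_self_nonneg (a.2 - b.2)
  have hKt0 : 0 ≤ K * (a.1 - b.1) ^ 2 := by positivity
  have hjz0 : 0 ≤ j * SB n (a.2 - b.2) (a.2 - b.2) := by positivity
  have hmain : M + θ / 2 + 1 / 2 * B (a - b) (a - b) ≤ u' a - v b := by linarith
  have hmem : M + θ / 2 ≤ u' a - v b := by linarith
  have hua := hu'le' a haD
  have hau := abs_le.mp (hCu a (hDsub haD))
  have hbv := abs_le.mp (hCv b (hDsub hbD))
  have hBC : B (a - b) (a - b) ≤ 2 * C0 := by linarith
  have hdt : |a.1 - b.1| < ρ1 := small_aux hρ10 hC00 hK (by linarith)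
  have hdz : ‖a.2 - b.2‖ < ρ2 := by
    have h1 := norm_sq_le_SB (a.2 - b.2)
    have h2 : j * ‖a.2 - b.2‖ ^ 2 ≤ 2 * C0 := by
      have := mul_le_mul_of_nonneg_left h1 hj0.le
      linarith
    have := small_aux hρ20 hC00 hj h2
    rwa [abs_of_nonneg (norm_nonneg _)] at this
  have hρ21 : ρ2 ≤ ρ1 := min_le_left _ _
  have hdist : dist a b < ρ1 := by
    rw [Prod.dist_eq]
    refine max_lt ?_ ?_
    · rw [Real.dist_eq]; exact hdt
    · rw [dist_eq_norm]; exact hdz.trans_le hρ21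
  have habQ : (a, b) ∈ Q := ⟨⟨haD, hbD⟩, hmem⟩
  have hdρ : dist a b ≤ ρ := hdist.le.trans (min_le_left _ _)
  obtain ⟨haI, hbI⟩ := hρ (a, b) habQ hdρ
  simp only at haI hbI
  have key := touching_aux hΓ hf hΩo hT'T hsub hsup hε0 haI hbI u' hu' _ _ A hii hiii hδ0 hδ1
  rw [← hm] at key
  -- compare exponents
  have ha1 : B (a - b - (2 : ℝ) • e) (1, 0) = K * (a.1 - b.1 - 2 * e.1) := BB_one_zero_sub K j a b e
  have hb1 : B (a - b + (2 : ℝ) • e) (1, 0) = K * (a.1 - b.1 + 2 * e.1) := BB_one_zero_add K j a b e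
  rw [ha1, hb1] at key
  have he1 : |e.1| ≤ r := (norm_fst_le e).trans her.le
  have he1' := abs_le.mp he1
  have hηa : η₂ ≤ η / (T - a.1) ^ 2 := by
    have h1 := haI.1.1
    have h2 := haI.1.2
    rw [hη₂]
    have h3 : 0 < T - a.1 := by linarith
    gcongr
    linarith
  have hGmono : G a.1 a.2 (v b) ≤ G a.1 a.2 (u a) := hGm a.1 a.2 (by linarith)
  have hGmem1 : ((a.1, a.2, v b) : ℝ × (Fin n → ℂ) × ℝ) ∈
      Set.Icc 0 T ×ˢ closure Ω ×ˢ Set.Icc (-Cv) Cv :=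
    ⟨⟨haD.1.1, haD.1.2.trans hT'T.le⟩, haD.2, hbv⟩
  have hGmem2 : ((b.1, b.2, v b) : ℝ × (Fin n → ℂ) × ℝ) ∈
      Set.Icc 0 T ×ˢ closure Ω ×ˢ Set.Icc (-Cv) Cv :=
    ⟨⟨hbD.1.1, hbD.1.2.trans hT'T.le⟩, hbD.2, hbv⟩
  have hGd := hρG _ hGmem1 _ hGmem2 (by
    have h1 : ρ1 ≤ ρG := min_le_right _ _
    simp only [Prod.dist_eq, dist_self]
    refine max_lt ?_ (max_lt ?_ hρG0)
    · rw [Real.dist_eq]; linarith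
    · rw [dist_eq_norm]; linarith)
  rw [Real.dist_eq] at hGd
  have hGd' := abs_lt.mp hGd
  have hGb := abs_le.mp ((Real.norm_eq_abs _).symm.le.trans (hCG _ hGmem2))
  simp only at hGd' hGb
  have hKe : 4 * K * e.1 ≤ η₂ / 4 := by
    refine le_trans ?_ hr3
    gcongr
    exact he1'.2
  set X : ℝ := K * (a.1 - b.1 + 2 * e.1) + G b.1 b.2 (v b) with hX
  have hexp : X ≤ -(η₂ / 2) +
      (K * (a.1 - b.1 - 2 * e.1) + η / (T - a.1) ^ 2 + G a.1 a.2 (u a)) := by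
    rw [hX]
    linarith
  have hga : 0 ≤ g a.2 := hg0 a.2 haI.2
  have hlow : Real.exp X * g a.2 ≤ (1 - δ) *
      (Real.exp (K * (a.1 - b.1 - 2 * e.1) + η / (T - a.1) ^ 2 + G a.1 a.2 (u a)) * g a.2) := by
    have h1 : 1 - δ = Real.exp (-(η₂ / 2)) := by rw [hδ]; ring
    rw [h1, ← mul_assoc, ← Real.exp_add]
    gcongr
  have hXE : Real.exp X ≤ E0 := by
    rw [hE0, hX]
    apply Real.exp_le_exp.mpr
    have h1 : K * (a.1 - b.1 + 2 * e.1) ≤ K * (T + 2) := by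
      have h2 := haI.1.2
      have h3 := hbI.1.1
      exact mul_le_mul_of_nonneg_left (by linarith [he1'.2]) hK0.le
    linarith [hGb.2]
  have hZa : a.2 ∈ Z := Or.inl ⟨(a, b), ⟨habQ, hdρ⟩, rfl⟩
  have hZb : b.2 ∈ Z := Or.inr ⟨(a, b), ⟨habQ, hdρ⟩, rfl⟩
  have hgd := hρg a.2 hZa b.2 hZb (by rw [dist_eq_norm]; exact hdz.trans_le (min_le_right _ _))
  rw [Real.dist_eq] at hgd
  have hgd' := abs_lt.mp hgd
  have hfin : Real.exp X * (g b.2 - g a.2) ≤ E0 * τ := by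
    calc Real.exp X * (g b.2 - g a.2) ≤ Real.exp X * τ := by
          gcongr
          linarith
      _ ≤ _ := by gcongr
  have hEτ : E0 * τ = δ * m / 2 := by rw [hτ]; field_simp
  have hδm : 0 < δ * m := by positivity
  rw [mul_sub] at hfin
  linarith
end

section
/- Assume Ω is a bounded smooth domain and the pair (u₀, g) is admissible. Then for every ε > 0, there exists a continuous ε-superbarrier for the Cauchy–Dirichlet problem which is Lipschitz in t. -/
open Filter Topology Set

/-- Second directional derivative. -/
noncomputable def D2 {E : Type*} [NormedAddCommGroup E] [NormedSpace ℝ E] (u : E → ℝ) (z e : E) : ℝ :=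
  iteratedFDeriv ℝ 2 u z ![e, e]

theorem D2_line {E : Type*} [NormedAddCommGroup E] [NormedSpace ℝ E] (u : E → ℝ) (z e : E)
    (hu : ContDiffAt ℝ 2 u z) :
    D2 u z e = deriv (deriv (fun s : ℝ => u (z + s • e))) 0 := by
  have hline : ∀ s : ℝ, HasDerivAt (fun s : ℝ => z + s • e) e s := by
    intro s
    simpa using ((hasDerivAt_id s).smul_const e).const_add z
  have hc : ContinuousAt (fun s : ℝ => z + s • e) 0 := (hline 0).continuousAt
  have h0 : z + (0 : ℝ) • e = z := by simp
  have hev : ∀ᶠ y in 𝓝 z, DifferentiableAt ℝ u y := by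
    have h8 : ∀ᶠ y in 𝓝 z, ContDiffAt ℝ 2 u y := hu.eventually (by simp)
    filter_upwards [h8] with y hy
    exact hy.differentiableAt two_ne_zero
  have hev2 : ∀ᶠ s in 𝓝 (0 : ℝ), DifferentiableAt ℝ u (z + s • e) := by
    have h9 : ∀ᶠ y in 𝓝 (z + (0 : ℝ) • e), DifferentiableAt ℝ u y := by rw [h0]; exact hev
    exact hc.eventually h9
  have hd : deriv (fun s : ℝ => u (z + s • e)) =ᶠ[𝓝 0] fun s => fderiv ℝ u (z + s • e) e := by
    filter_upwards [hev2] with s hs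
    exact (hs.hasFDerivAt.comp_hasDerivAt s (hline s)).deriv
  rw [hd.deriv_eq]
  have hf : DifferentiableAt ℝ (fderiv ℝ u) z :=
    (hu.fderiv_right (m := 1) (by norm_num)).differentiableAt (by norm_num)
  have h1 : HasFDerivAt (fderiv ℝ u) (fderiv ℝ (fderiv ℝ u) z) (z + (0 : ℝ) • e) := by
    rw [h0]; exact hf.hasFDerivAt
  have h2 : HasDerivAt (fun s : ℝ => fderiv ℝ u (z + s • e)) (fderiv ℝ (fderiv ℝ u) z e) 0 :=
    h1.comp_hasDerivAt (0 : ℝ) (hline 0)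
  have h3 : HasDerivAt (fun s : ℝ => fderiv ℝ u (z + s • e) e) (fderiv ℝ (fderiv ℝ u) z e e) 0 := by
    simpa using h2.clm_apply (hasDerivAt_const (0 : ℝ) e)
  rw [h3.deriv, D2, iteratedFDeriv_two_apply]
  rfl

theorem D2_add {E : Type*} [NormedAddCommGroup E] [NormedSpace ℝ E] (u v : E → ℝ) (z e : E)
    (hu : ContDiffAt ℝ 2 u z) (hv : ContDiffAt ℝ 2 v z) :
    D2 (fun x => u x + v x) z e = D2 u z e + D2 v z e := by
  have := iteratedFDeriv_add_apply (i := 2) (𝕜 := ℝ) hu hv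
  simp only [D2]
  change iteratedFDeriv ℝ 2 (u + v) z ![e, e] = _
  rw [this]; rfl

theorem D2_const_mul {E : Type*} [NormedAddCommGroup E] [NormedSpace ℝ E] (u : E → ℝ) (a : ℝ)
    (z e : E) (hu : ContDiffAt ℝ 2 u z) :
    D2 (fun x => a * u x) z e = a * D2 u z e := by
  have := iteratedFDeriv_const_smul_apply (i := 2) (𝕜 := ℝ) (a := a) hu
  simp only [D2]
  change iteratedFDeriv ℝ 2 (a • u) z ![e, e] = _
  rw [this]; rfl

theorem iter_add_const {E : Type*} [NormedAddCommGroup E] [NormedSpace ℝ E] (u : E → ℝ) (a : ℝ)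
    (z : E) : iteratedFDeriv ℝ 2 (fun x => u x + a) z = iteratedFDeriv ℝ 2 u z := by
  ext m
  simp only [iteratedFDeriv_two_apply]
  have : fderiv ℝ (fun x => u x + a) = fderiv ℝ u := by
    ext1 x; exact fderiv_add_const a
  rw [this]

theorem D2_add_const {E : Type*} [NormedAddCommGroup E] [NormedSpace ℝ E] (u : E → ℝ) (a : ℝ)
    (z e : E) : D2 (fun x => u x + a) z e = D2 u z e := by
  simp only [D2, iter_add_const]

theorem D2_nonneg_of_min {E : Type*} [NormedAddCommGroup E] [NormedSpace ℝ E] (w : E → ℝ)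
    (z e : E) (hw : ContDiffAt ℝ 2 w z) (hm : IsLocalMin w z) : 0 ≤ D2 w z e := by
  rw [D2_line w z e hw]
  have h0 : z + (0 : ℝ) • e = z := by simp
  have hc : ContinuousAt (fun s : ℝ => z + s • e) 0 := by fun_prop
  have hm' : IsLocalMin (fun s : ℝ => w (z + s • e)) 0 := by
    have : ∀ᶠ y in 𝓝 (z + (0 : ℝ) • e), w z ≤ w y := by rw [h0]; exact hm
    have := hc.eventually this
    unfold IsLocalMin IsMinFilter
    simpa using this
  by_contra hneg
  push Not at hneg
  have hcw : ContinuousAt (fun s : ℝ => w (z + s • e)) 0 :=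
    ContinuousAt.comp (g := w) (by rw [h0]; exact hw.continuousAt) hc
  have hM := isLocalMax_of_deriv_deriv_neg hneg hm'.deriv_eq_zero hcw
  have hconst : (fun s : ℝ => w (z + s • e)) =ᶠ[𝓝 0] fun _ => w z := by
    filter_upwards [hM, hm'] with s h1 h2
    simp at h1 h2
    linarith
  have h1 : deriv (fun s : ℝ => w (z + s • e)) =ᶠ[𝓝 0] fun _ => 0 := by
    filter_upwards [hconst.eventuallyEq_nhds] with s hs
    rw [hs.deriv_eq]; simp
  rw [h1.deriv_eq] at hneg
  simp at hneg

theorem D2_le_of_touch {E : Type*} [NormedAddCommGroup E] [NormedSpace ℝ E] (q b : E → ℝ)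
    (z e : E) (hq : ContDiffAt ℝ 2 q z) (hb : ContDiffAt ℝ 2 b z) (h0 : q z = b z)
    (h : ∀ᶠ y in 𝓝 z, q y ≤ b y) : D2 q z e ≤ D2 b z e := by
  have hq' : ContDiffAt ℝ 2 (fun x => (-1 : ℝ) * q x) z := contDiffAt_const.mul hq
  have := D2_nonneg_of_min (fun x => b x + (-1) * q x) z e (hb.add hq') (by
    filter_upwards [h] with y hy
    linarith)
  rw [D2_add _ _ _ _ hb hq', D2_const_mul _ _ _ _ hq] at this
  linarith

theorem D2_exp {E : Type*} [NormedAddCommGroup E] [NormedSpace ℝ E] (ρ : E → ℝ) (K : ℝ)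
    (z e : E) (hρ : ContDiff ℝ 2 ρ) :
    D2 (fun x => Real.exp (K * ρ x)) z e
      = Real.exp (K * ρ z) * K * (D2 ρ z e + K * (fderiv ℝ ρ z e) ^ 2) := by
  rw [D2_line _ z e (by fun_prop), D2_line ρ z e hρ.contDiffAt]
  have hline : ∀ s : ℝ, HasDerivAt (fun s : ℝ => z + s • e) e s := by
    intro s
    simpa using ((hasDerivAt_id s).smul_const e).const_add z
  have h0 : z + (0 : ℝ) • e = z := by simp
  set r : ℝ → ℝ := fun s => ρ (z + s • e) with hr
  have hrC : ContDiff ℝ 2 r := by fun_prop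
  have hr1 : ∀ s, HasDerivAt r (deriv r s) s := fun s =>
    (hrC.differentiable (by norm_num) s).hasDerivAt
  have hr2 : HasDerivAt (deriv r) (deriv (deriv r) 0) 0 := by
    have : ContDiff ℝ 1 (deriv r) := by
      have h2 : ContDiff ℝ (1 + 1) r := by simpa [one_add_one_eq_two] using hrC
      exact (contDiff_succ_iff_deriv.mp h2).2.2
    exact (this.differentiable (by norm_num) 0).hasDerivAt
  have hr0 : deriv r 0 = fderiv ℝ ρ z e := by
    have h1 : HasFDerivAt ρ (fderiv ℝ ρ z) (z + (0 : ℝ) • e) := by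
      rw [h0]; exact (hρ.differentiable (by norm_num) z).hasFDerivAt
    exact (h1.comp_hasDerivAt (0 : ℝ) (hline 0)).deriv
  have hE : ∀ s, HasDerivAt (fun s => Real.exp (K * r s))
      (Real.exp (K * r s) * (K * deriv r s)) s := fun s => ((hr1 s).const_mul K).exp
  have hE' : deriv (fun s => Real.exp (K * r s)) = fun s => Real.exp (K * r s) * (K * deriv r s) :=
    funext fun s => (hE s).deriv
  change deriv (deriv (fun s => Real.exp (K * r s))) 0 = _
  have h9 : deriv (fun s => Real.exp (K * r s) * (K * deriv r s)) 0 = _ :=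
    ((hE 0).mul (hr2.const_mul K)).deriv
  rw [hE', h9, hr0]
  have : r 0 = ρ z := by simp [hr]
  rw [this]; ring

theorem D2_slice {E : Type*} [NormedAddCommGroup E] [NormedSpace ℝ E] (ψ : ℝ × E → ℝ)
    (hψ : ContDiff ℝ 2 ψ) (t : ℝ) (z e : E) :
    D2 (fun x => ψ (t, x)) z e = D2 ψ (t, z) (0, e) := by
  rw [D2_line _ z e (by fun_prop), D2_line ψ _ _ hψ.contDiffAt]
  simp

theorem D2_continuous {E : Type*} [NormedAddCommGroup E] [NormedSpace ℝ E] (ψ : E → ℝ)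
    (hψ : ContDiff ℝ 2 ψ) (e : E) : Continuous (fun z => D2 ψ z e) := by
  have := hψ.continuous_iteratedFDeriv (m := 2) le_rfl
  unfold D2
  fun_prop

/-- compactness lemma -/
theorem compact_dom {X : Type*} [TopologicalSpace X] {K : Set X} (hK : IsCompact K)
    {F w : X → ℝ} (hF : ContinuousOn F K) (hw : ContinuousOn w K) (hw0 : ∀ x ∈ K, 0 ≤ w x)
    (h : ∀ x ∈ K, w x = 0 → F x < 0) : ∃ C : ℝ, ∀ C' ≥ C, ∀ x ∈ K, F x ≤ C' * w x := by
  have hS : IsCompact (K ∩ {x | 0 ≤ F x}) := by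
    obtain ⟨u, hu, he⟩ := continuousOn_iff_isClosed.mp hF (Set.Ici 0) isClosed_Ici
    have : K ∩ {x | 0 ≤ F x} = K ∩ u := by
      rw [Set.inter_comm, Set.inter_comm K u, ← he]; rfl
    rw [this]
    exact hK.inter_right hu
  have hpos : ∀ x ∈ K ∩ {x | 0 ≤ F x}, w x ≠ 0 := fun x hx h0 =>
    absurd (h x hx.1 h0) (not_lt.mpr hx.2)
  obtain ⟨C, hC⟩ := hS.exists_bound_of_continuousOn (f := fun x => F x / w x)
    ((hF.mono inter_subset_left).div (hw.mono inter_subset_left) hpos)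
  refine ⟨max C 0, fun C' hC' x hx => ?_⟩
  have hC0 : 0 ≤ C' := le_trans (le_max_right _ _) hC'
  by_cases hFx : 0 ≤ F x
  · have h1 := hC x ⟨hx, hFx⟩
    have hwx : 0 < w x := lt_of_le_of_ne (hw0 x hx) (Ne.symm (hpos x ⟨hx, hFx⟩))
    have h2 : F x / w x ≤ C' := le_trans (le_abs_self _) (le_trans h1 (le_trans (le_max_left _ _) hC'))
    rwa [div_le_iff₀ hwx] at h2
  · push Not at hFx
    exact hFx.le.trans (mul_nonneg hC0 (hw0 x hx))

/-- smooth approximation -/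
theorem smooth_approx {n : ℕ} {S : Set (ℝ × (Fin n → ℂ))} (hS : IsCompact S)
    {F : ℝ × (Fin n → ℂ) → ℝ} (hF : ContinuousOn F S) {δ : ℝ} (hδ : 0 < δ) :
    ∃ ψ : ℝ × (Fin n → ℂ) → ℝ, ContDiff ℝ 2 ψ ∧ ∀ p ∈ S, |ψ p - F p| < δ := by
  have : CompactSpace S := isCompact_iff_compactSpace.mp hS
  let A : Subalgebra ℝ C(S, ℝ) :=
    { carrier := {h | ∃ ψ : ℝ × (Fin n → ℂ) → ℝ, ContDiff ℝ 2 ψ ∧ ∀ p : S, h p = ψ p}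
      mul_mem' := by
        rintro a b ⟨x, hx, hx'⟩ ⟨y, hy, hy'⟩
        exact ⟨fun p => x p * y p, hx.mul hy, fun p => by simp [hx', hy']⟩
      add_mem' := by
        rintro a b ⟨x, hx, hx'⟩ ⟨y, hy, hy'⟩
        exact ⟨fun p => x p + y p, hx.add hy, fun p => by simp [hx', hy']⟩
      algebraMap_mem' := by
        intro r
        exact ⟨fun _ => r, contDiff_const, fun p => by simp⟩ }
  have hA : A.SeparatesPoints := by
    intro x y hxy
    have hmem : ∀ l : (ℝ × (Fin n → ℂ)) →L[ℝ] ℝ, l x ≠ l y →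
        ∃ f ∈ (fun f : C(S, ℝ) => (f : S → ℝ)) '' (A : Set C(S, ℝ)), f x ≠ f y := by
      intro l hl
      refine ⟨fun p => l p, ⟨⟨fun p => l p, by fun_prop⟩, ⟨l, l.contDiff, fun p => rfl⟩, rfl⟩, hl⟩
    obtain ⟨l, hl⟩ := SeparatingDual.exists_separating_of_ne (R := ℝ)
      (x := (x : ℝ × (Fin n → ℂ))) (y := y) (fun h => hxy (Subtype.ext h))
    exact hmem l hl
  obtain ⟨⟨h, ψ, hψ, hψ'⟩, hh⟩ :=
    ContinuousMap.exists_mem_subalgebra_near_continuous_of_separatesPoints A hA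
      (fun p : S => F p) hF.domRestrict δ hδ
  refine ⟨ψ, hψ, fun p hp => ?_⟩
  have := hh ⟨p, hp⟩
  simpa [hψ'] using this

/-- Real Laplacian on `ℂⁿ`. -/
noncomputable def Lap {n : ℕ} (u : (Fin n → ℂ) → ℝ) (z : Fin n → ℂ) : ℝ :=
  ∑ j, (D2 u z (Pi.single j 1) + D2 u z (Pi.single j Complex.I))

/-- Squared gradient on `ℂⁿ`. -/
noncomputable def Grad2 {n : ℕ} (u : (Fin n → ℂ) → ℝ) (z : Fin n → ℂ) : ℝ :=
  ∑ j, ((fderiv ℝ u z (Pi.single j 1)) ^ 2 + (fderiv ℝ u z (Pi.single j Complex.I)) ^ 2)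

theorem Grad2_nonneg {n : ℕ} (u : (Fin n → ℂ) → ℝ) (z : Fin n → ℂ) : 0 ≤ Grad2 u z :=
  Finset.sum_nonneg fun _ _ => by positivity

theorem Grad2_ne {n : ℕ} (u : (Fin n → ℂ) → ℝ) (z : Fin n → ℂ) (h : fderiv ℝ u z ≠ 0) :
    Grad2 u z ≠ 0 := by
  intro h0
  apply h
  have h1 := (Finset.sum_eq_zero_iff_of_nonneg (fun _ _ => by positivity)).mp h0
  ext v
  have hv : v = ∑ j, ((v j).re • (Pi.single j 1 : Fin n → ℂ) +
      (v j).im • (Pi.single j Complex.I : Fin n → ℂ)) := by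
    conv_lhs => rw [← Finset.univ_sum_single v]
    refine Finset.sum_congr rfl fun j _ => ?_
    rw [← Pi.single_smul, ← Pi.single_smul, ← Pi.single_add]
    congr 1
    simp [Complex.re_add_im]
  rw [hv, map_sum]
  simp only [map_add, map_smul]
  refine Finset.sum_eq_zero fun j _ => ?_
  have h2 := h1 j (Finset.mem_univ j)
  have h3 : fderiv ℝ u z (Pi.single j 1) = 0 := by nlinarith [sq_nonneg (fderiv ℝ u z (Pi.single j 1)), sq_nonneg (fderiv ℝ u z (Pi.single j Complex.I))]
  have h4 : fderiv ℝ u z (Pi.single j Complex.I) = 0 := by nlinarith [sq_nonneg (fderiv ℝ u z (Pi.single j 1)), sq_nonneg (fderiv ℝ u z (Pi.single j Complex.I))]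
  simp [h3, h4]

theorem Lap_exp {n : ℕ} (ρ : (Fin n → ℂ) → ℝ) (K : ℝ) (z : Fin n → ℂ) (hρ : ContDiff ℝ 2 ρ) :
    Lap (fun x => Real.exp (K * ρ x)) z
      = Real.exp (K * ρ z) * K * (Lap ρ z + K * Grad2 ρ z) := by
  simp only [Lap, Grad2, D2_exp _ _ _ _ hρ, Finset.mul_sum, ← Finset.sum_add_distrib]
  refine Finset.sum_congr rfl fun j _ => ?_
  ring

theorem Lap_continuous {n : ℕ} (u : (Fin n → ℂ) → ℝ) (hu : ContDiff ℝ 2 u) :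
    Continuous (Lap u) :=
  continuous_finsetSum _ fun _ _ => (D2_continuous u hu _).add (D2_continuous u hu _)

theorem Grad2_continuous {n : ℕ} (u : (Fin n → ℂ) → ℝ) (hu : ContDiff ℝ 2 u) :
    Continuous (Grad2 u) := by
  have := hu.continuous_fderiv (by norm_num)
  unfold Grad2
  fun_prop

theorem Lap_slice_continuous {n : ℕ} (ψ : ℝ × (Fin n → ℂ) → ℝ) (hψ : ContDiff ℝ 2 ψ) :
    Continuous (fun p : ℝ × (Fin n → ℂ) => Lap (fun x => ψ (p.1, x)) p.2) := by
  unfold Lap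
  simp only [D2_slice ψ hψ]
  exact continuous_finsetSum _ fun _ _ => (D2_continuous ψ hψ _).add (D2_continuous ψ hψ _)

theorem Lap_le_of_touch {n : ℕ} (q b : (Fin n → ℂ) → ℝ) (z : Fin n → ℂ)
    (hq : ContDiffAt ℝ 2 q z) (hb : ContDiffAt ℝ 2 b z) (h0 : q z = b z)
    (h : ∀ᶠ y in 𝓝 z, q y ≤ b y) : Lap q z ≤ Lap b z :=
  Finset.sum_le_sum fun _ _ =>
    add_le_add (D2_le_of_touch q b z _ hq hb h0 h) (D2_le_of_touch q b z _ hq hb h0 h)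

theorem Lap_comb {n : ℕ} (u W : (Fin n → ℂ) → ℝ) (A : ℝ) (z : Fin n → ℂ)
    (hu : ContDiffAt ℝ 2 u z) (hW : ContDiffAt ℝ 2 W z) :
    Lap (fun x => u x + A * (1 - W x)) z = Lap u z - A * Lap W z := by
  have : (fun x => u x + A * (1 - W x)) = fun x => (u x + (-A) * W x) + A := by
    ext x; ring
  rw [this]
  have hW' : ContDiffAt ℝ 2 (fun x => (-A) * W x) z := contDiffAt_const.mul hW
  simp only [Lap, D2_add_const, D2_add _ _ _ _ hu hW', D2_const_mul _ _ _ _ hW, Finset.mul_sum,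
    ← Finset.sum_sub_distrib]
  refine Finset.sum_congr rfl fun j _ => ?_
  ring

theorem Fop_bot {n : ℕ} (Γ : Set (Fin n → ℝ)) (f : (Fin n → ℝ) → ℝ)
    (hΓ : IsGammaCone n Γ) (q : (Fin n → ℂ) → ℝ) (z : Fin n → ℂ) (hq : Lap q z < 0) :
    Fop f Γ (complexHessian q z) = ⊥ := by
  unfold Fop
  split_ifs with h1 h2
  · exfalso
    have hcl : closure Γ ⊆ {x | 0 ≤ ∑ i, x i} := by
      apply closure_minimal
      · intro x hx
        have := hΓ.2.2.2.2.2.2 hx 1 le_rfl le_rfl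
        simp only [esym, Finset.powersetCard_one, Finset.sum_map] at this
        simpa using this.le
      · exact isClosed_le continuous_const (by fun_prop)
    have h3 := hcl h2
    have h4 := h1.trace_eq_sum_eigenvalues
    have h5 := congrArg Complex.re h4
    have h6 : (Matrix.trace (complexHessian q z)).re = Lap q z / 4 := by
      simp only [Matrix.trace, Matrix.diag, complexHessian, Lap, D2, Finset.sum_div, Complex.re_sum]
      refine Finset.sum_congr rfl fun j _ => ?_
      simp [-Complex.ofReal_add, -Complex.ofReal_sub, -Complex.ofReal_div]
    rw [h6] at h5
    have h7 : (∑ i, (h1.eigenvalues i : ℂ)).re = ∑ i, h1.eigenvalues i := by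
      simp
    have h8 : (0 : ℝ) ≤ ∑ i, h1.eigenvalues i := h3
    erw [h7] at h5
    linarith
  · rfl
  · rfl

theorem lip_t {n : ℕ} (ψ : ℝ × (Fin n → ℂ) → ℝ) (hψ : ContDiff ℝ 2 ψ) (T : ℝ)
    (S : Set (Fin n → ℂ)) (hS : IsCompact S) :
    ∃ L : ℝ, ∀ t₁ ∈ Set.Icc (0 : ℝ) T, ∀ t₂ ∈ Set.Icc (0 : ℝ) T, ∀ z ∈ S,
      |ψ (t₁, z) - ψ (t₂, z)| ≤ L * |t₁ - t₂| := by
  have hc : Continuous (fun p => fderiv ℝ ψ p (1, 0)) := by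
    have := hψ.continuous_fderiv (by norm_num)
    fun_prop
  obtain ⟨L, hL⟩ := ((isCompact_Icc (a := (0 : ℝ)) (b := T)).prod hS).exists_bound_of_continuousOn
    hc.continuousOn
  refine ⟨L, fun t₁ h₁ t₂ h₂ z hz => ?_⟩
  have hd : ∀ t, HasDerivAt (fun t => ψ (t, z)) (fderiv ℝ ψ (t, z) (1, 0)) t := by
    intro t
    have h1 : HasFDerivAt ψ (fderiv ℝ ψ (t, z)) (t, z) :=
      (hψ.differentiable (by norm_num) (t, z)).hasFDerivAt
    exact h1.comp_hasDerivAt t ((hasDerivAt_id t).prodMk (hasDerivAt_const t z))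
  have := Convex.norm_image_sub_le_of_norm_hasDerivWithin_le (s := Set.Icc (0 : ℝ) T)
    (f := fun t => ψ (t, z)) (C := L) (fun t _ => (hd t).hasDerivWithinAt)
    (fun t ht => hL (t, z) ⟨ht, hz⟩) (convex_Icc 0 T) h₂ h₁
  simpa using this

/-- existence of continuous ε-superbarriers, Lipschitz in time, for a bounded smooth domain and an admissible pair (u₀, g). -/
theorem stmt18
    {n : ℕ} (hn : 1 ≤ n) (Γ : Set (Fin n → ℝ)) (f : (Fin n → ℝ) → ℝ)
    (hΓ : IsGammaCone n Γ) (hf : IsHessianDensity n Γ f)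
    (Ω : Set (Fin n → ℂ)) (hΩo : IsOpen Ω) (hΩb : Bornology.IsBounded Ω)
    (hΩc : IsConnected Ω) (T : ℝ) (hT : 0 < T)
    (G : ℝ → (Fin n → ℂ) → ℝ → ℝ)
    (hGc : ContinuousOn (fun p : ℝ × (Fin n → ℂ) × ℝ => G p.1 p.2.1 p.2.2)
      (Set.Icc 0 T ×ˢ closure Ω ×ˢ Set.univ))
    (hGm : ∀ t z, Monotone (fun r => G t z r))
    (g : (Fin n → ℂ) → ℝ) (hgc : ContinuousOn g Ω)
    (hg0 : ∀ z ∈ Ω, 0 ≤ g z) (hgb : ∃ C, ∀ z ∈ Ω, g z ≤ C)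
    (φ : ℝ → (Fin n → ℂ) → ℝ)
    (hφc : ContinuousOn (fun p : ℝ × (Fin n → ℂ) => φ p.1 p.2) (Set.Icc 0 T ×ˢ frontier Ω))
    (u₀ : (Fin n → ℂ) → ℝ) (hu₀c : ContinuousOn u₀ (closure Ω))
    (hu₀sh : GammaSubharmonicOn Γ Ω u₀)
    (hu₀φ : ∀ z ∈ frontier Ω, u₀ z = φ 0 z)
    (hsmooth : ∃ ρ : (Fin n → ℂ) → ℝ, ContDiff ℝ (⊤ : ℕ∞) ρ ∧
      Ω = {z | ρ z < 0} ∧ ∀ z ∈ frontier Ω, fderiv ℝ ρ z ≠ 0)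
    (hadm : Admissible f Γ Ω g u₀) :
    ∀ ε > 0, ∃ v : ℝ × (Fin n → ℂ) → ℝ,
      ContinuousOn v (Set.Ico 0 T ×ˢ closure Ω) ∧ LipschitzInT Ω T v ∧
        SuperBarrier f Γ G g Ω T φ u₀ ε v := by
  intro ε hε
  obtain ⟨ρ, hρ', hΩρ, hgrad⟩ := hsmooth
  have hρ : ContDiff ℝ 2 ρ := contDiff_infty.mp hρ' 2
  have hclK : IsCompact (closure Ω) := hΩb.isCompact_closure
  have hfrK : IsCompact (frontier Ω) :=
    hclK.of_isClosed_subset isClosed_frontier frontier_subset_closure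
  have hρcl : ∀ z ∈ closure Ω, ρ z ≤ 0 := by
    have : closure Ω ⊆ {z | ρ z ≤ 0} := by
      apply closure_minimal
      · intro z hz
        rw [hΩρ] at hz
        have hz' : ρ z < 0 := hz
        exact hz'.le
      · exact isClosed_le hρ.continuous continuous_const
    exact this
  have hρin : ∀ z ∈ closure Ω, z ∉ frontier Ω → ρ z < 0 := by
    intro z hz hzf
    have : z ∈ Ω := by
      by_contra hzn
      exact hzf (by rw [hΩo.frontier_eq]; exact ⟨hz, hzn⟩)
    rw [hΩρ] at this
    exact this
  have hρfr : ∀ z ∈ frontier Ω, ρ z = 0 := by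
    intro z hz
    have h1 := hρcl z (frontier_subset_closure hz)
    rw [hΩo.frontier_eq] at hz
    have h2 : ¬ ρ z < 0 := fun h => hz.2 (by rw [hΩρ]; exact h)
    linarith
  -- choice of `K`
  obtain ⟨K, hK1, hK⟩ : ∃ K : ℝ, 0 < K ∧ ∀ z ∈ frontier Ω, 1 ≤ Lap ρ z + K * Grad2 ρ z := by
    obtain ⟨K, hK⟩ := compact_dom hfrK (F := fun z => 1 - Lap ρ z) (w := Grad2 ρ)
      (continuous_const.sub (Lap_continuous ρ hρ)).continuousOn
      (Grad2_continuous ρ hρ).continuousOn (fun z _ => Grad2_nonneg ρ z)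
      (fun z hz h0 => absurd h0 (Grad2_ne ρ z (hgrad z hz)))
    refine ⟨max K 1, lt_of_lt_of_le one_pos (le_max_right _ _), fun z hz => ?_⟩
    have := hK (max K 1) (le_max_left _ _) z hz
    linarith
  set W : (Fin n → ℂ) → ℝ := fun z => Real.exp (K * ρ z) with hWdef
  have hW : ContDiff ℝ 2 W := by fun_prop
  have hLW : ∀ z ∈ frontier Ω, K ≤ Lap W z := by
    intro z hz
    rw [hWdef, Lap_exp ρ K z hρ, hρfr z hz]
    simp only [mul_zero, Real.exp_zero, one_mul]
    nlinarith [hK z hz]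
  have hLWc : Continuous (Lap W) := Lap_continuous W hW
  have hW0 : ∀ z ∈ closure Ω, 0 ≤ 1 - W z := by
    intro z hz
    have : K * ρ z ≤ 0 := mul_nonpos_of_nonneg_of_nonpos hK1.le (hρcl z hz)
    have := Real.exp_le_one_iff.mpr this
    simp only [hWdef]; linarith
  have hWpos : ∀ z ∈ closure Ω, 1 - W z = 0 → z ∈ frontier Ω := by
    intro z hz h0
    by_contra hzf
    have : K * ρ z < 0 := mul_neg_of_pos_of_neg hK1 (hρin z hz hzf)
    have := (Real.exp_lt_one_iff (x := K * ρ z)).mpr this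
    simp only [hWdef] at h0; linarith
  have hWfr : ∀ z ∈ frontier Ω, W z = 1 := by
    intro z hz
    simp [hWdef, hρfr z hz]
  -- smooth approximation of boundary data
  obtain ⟨ψ, hψ, hψφ⟩ := smooth_approx (n := n)
    ((isCompact_Icc (a := (0 : ℝ)) (b := T)).prod hfrK)
    (F := fun p => φ p.1 p.2 + ε / 2) (hφc.add continuousOn_const) (δ := ε / 4) (by linarith)
  have hψφ' : ∀ t ∈ Set.Icc (0 : ℝ) T, ∀ z ∈ frontier Ω,
      φ t z + ε / 4 < ψ (t, z) ∧ ψ (t, z) < φ t z + ε := by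
    intro t ht z hz
    have := abs_lt.mp (hψφ (t, z) ⟨ht, hz⟩)
    simp only at this
    constructor <;> linarith [this.1, this.2]
  -- admissibility
  obtain ⟨uε, Cε, hCε, huc, hub, hu⟩ := hadm (ε / 4) (by linarith)
  obtain ⟨m, hm⟩ : ∃ m : ℝ, ∀ z ∈ closure Ω, m ≤ uε z := by
    obtain ⟨M, hM⟩ := hclK.exists_bound_of_continuousOn huc
    exact ⟨-M, fun z hz => (abs_le.mp (hM z hz)).1⟩
  obtain ⟨M, hM⟩ : ∃ M : ℝ, ∀ t ∈ Set.Icc (0 : ℝ) T, ∀ z ∈ closure Ω, -M ≤ G t z m := by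
    have hc : ContinuousOn (fun p : ℝ × (Fin n → ℂ) => G p.1 p.2 m)
        (Set.Icc 0 T ×ˢ closure Ω) :=
      hGc.comp (f := fun p : ℝ × (Fin n → ℂ) => (p.1, p.2, m)) (by fun_prop)
        (fun p hp => ⟨hp.1, hp.2, Set.mem_univ _⟩)
    obtain ⟨M, hM⟩ := ((isCompact_Icc (a := (0 : ℝ)) (b := T)).prod
      hclK).exists_bound_of_continuousOn hc
    exact ⟨M, fun t ht z hz => (abs_le.mp (hM (t, z) ⟨ht, hz⟩)).1⟩
  -- choice of `C`
  obtain ⟨C₁, hC₁⟩ := compact_dom ((isCompact_Icc (a := (0 : ℝ)) (b := T)).prod hfrK)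
    (F := fun p => φ p.1 p.2 - φ 0 p.2 - ε / 4) (w := fun p => p.1)
    ((hφc.sub (hφc.comp (f := fun p : ℝ × (Fin n → ℂ) => ((0 : ℝ), p.2)) (by fun_prop)
      (fun p hp => ⟨⟨le_rfl, hT.le⟩, hp.2⟩))).sub continuousOn_const)
    continuousOn_fst (fun p hp => hp.1.1) (by
      rintro ⟨t, z⟩ _ h0
      simp only at h0
      subst h0
      simp only
      linarith)
  set C : ℝ := max C₁ (max 0 (Cε + M)) with hC
  have hC1 : C₁ ≤ C := le_max_left _ _
  have hC0 : 0 ≤ C := le_trans (le_max_left _ _) (le_max_right _ _)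
  have hCM : Cε + M ≤ C := le_trans (le_max_right _ _) (le_max_right _ _)
  set a : ℝ × (Fin n → ℂ) → ℝ := fun p => uε p.2 + (ε / 4 + C * p.1) with ha
  have hac : ContinuousOn a (Set.Icc 0 T ×ˢ closure Ω) :=
    (huc.comp continuousOn_snd (fun p hp => hp.2)).add (by fun_prop)
  -- choice of `A`
  obtain ⟨A₁, hA₁⟩ := compact_dom hclK (F := fun z => u₀ z - ψ (0, z)) (w := fun z => 1 - W z)
    (hu₀c.sub (by have := hψ.continuous; fun_prop))
    (by have := hW.continuous; fun_prop) hW0 (by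
      intro z hz h0
      have hzf := hWpos z hz h0
      have := (hψφ' 0 ⟨le_rfl, hT.le⟩ z hzf).1
      rw [hu₀φ z hzf]; linarith)
  have hK2 : 0 < K / 2 := by linarith
  obtain ⟨A₂, hA₂⟩ := compact_dom ((isCompact_Icc (a := (0 : ℝ)) (b := T)).prod
      (hclK.inter_right (isClosed_le hLWc (continuous_const (y := K / 2)))))
    (F := fun p => a p - ψ p + 1) (w := fun p => 1 - W p.2)
    (((hac.mono (Set.prod_mono le_rfl inter_subset_left)).sub hψ.continuous.continuousOn).add
      continuousOn_const)
    (by have := hW.continuous; fun_prop) (fun p hp => hW0 p.2 hp.2.1) (by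
      intro p hp h0
      have h1 := hLW p.2 (hWpos p.2 hp.2.1 h0)
      have h2 : Lap W p.2 ≤ K / 2 := hp.2.2
      linarith)
  obtain ⟨A₃, hA₃⟩ := compact_dom ((isCompact_Icc (a := (0 : ℝ)) (b := T)).prod
      (hclK.inter_right (isClosed_le (continuous_const (y := K / 2)) hLWc)))
    (F := fun p => Lap (fun x => ψ (p.1, x)) p.2 + 1) (w := fun p => Lap W p.2)
    ((Lap_slice_continuous ψ hψ).add continuous_const).continuousOn
    (hLWc.comp continuous_snd).continuousOn
    (fun p hp => by
      have h2 : K / 2 ≤ Lap W p.2 := hp.2.2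
      linarith) (by
      intro p hp h0
      have h2 : K / 2 ≤ Lap W p.2 := hp.2.2
      linarith)
  set A : ℝ := max A₁ (max A₂ A₃) with hA
  have hA1 := hA₁ A (le_max_left _ _)
  have hA2 := hA₂ A (le_trans (le_max_left _ _) (le_max_right _ _))
  have hA3 := hA₃ A (le_trans (le_max_right _ _) (le_max_right _ _))
  set b : ℝ × (Fin n → ℂ) → ℝ := fun p => ψ p + A * (1 - W p.2) with hb
  have hbc : Continuous b := by
    have := hW.continuous
    have := hψ.continuous
    fun_prop
  set v : ℝ × (Fin n → ℂ) → ℝ := fun p => min (a p) (b p) with hv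
  have hvc' : ContinuousOn v (Set.Icc 0 T ×ˢ closure Ω) := ContinuousOn.inf hac hbc.continuousOn
  have hvc : ContinuousOn v (Set.Ico 0 T ×ˢ closure Ω) :=
    hvc'.mono (Set.prod_mono Ico_subset_Icc_self le_rfl)
  have henv : ∀ p ∈ Set.Ico (0 : ℝ) T ×ˢ closure Ω,
      uscEnvOn (Set.Ico 0 T ×ˢ closure Ω) v p = v p := by
    intro p hp
    have : (𝓝[Set.Ico (0 : ℝ) T ×ˢ closure Ω] p).NeBot :=
      mem_closure_iff_nhdsWithin_neBot.mp (subset_closure hp)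
    exact (hvc p hp).limsup_eq
  refine ⟨v, hvc, ?_, hvc.lowerSemicontinuousOn, ⟨?_, ?_⟩, ?_, ?_⟩
  · -- Lipschitz
    obtain ⟨L, hL⟩ := lip_t ψ hψ T (closure Ω) hclK
    refine ⟨max C L, fun t₁ h₁ t₂ h₂ z hz => ?_⟩
    refine (abs_min_sub_min_le_max _ _ _ _).trans (max_le ?_ ?_)
    · have : a (t₁, z) - a (t₂, z) = C * (t₁ - t₂) := by simp only [ha]; ring
      rw [this, abs_mul, abs_of_nonneg hC0]
      exact mul_le_mul_of_nonneg_right (le_max_left _ _) (abs_nonneg _)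
    · have : b (t₁, z) - b (t₂, z) = ψ (t₁, z) - ψ (t₂, z) := by simp only [hb]; ring
      rw [this]
      exact (hL t₁ (Ico_subset_Icc_self h₁) t₂ (Ico_subset_Icc_self h₂) z hz).trans
        (mul_le_mul_of_nonneg_right (le_max_right _ _) (abs_nonneg _))
  · exact (hvc.mono (Set.prod_mono Ioo_subset_Ico_self subset_closure)).lowerSemicontinuousOn
  · -- supersolution
    rintro ⟨t₀, z₀⟩ ⟨ht₀, hz₀⟩ q ⟨hq0, hqle, hqd⟩
    simp only at ht₀ hz₀
    have hz₀c : z₀ ∈ closure Ω := subset_closure hz₀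
    have ht₀c : t₀ ∈ Set.Icc (0 : ℝ) T := Ioo_subset_Icc_self ht₀
    obtain ⟨hqt, hqz⟩ := hqd.self_of_nhds
    simp only at hqt hqz
    have hz_ev : ∀ᶠ z in 𝓝 z₀, q (t₀, z) ≤ v (t₀, z) := by
      have hc : ContinuousAt (fun z : Fin n → ℂ => (t₀, z)) z₀ := by fun_prop
      exact hc.eventually hqle
    have ht_ev : ∀ᶠ t in 𝓝 t₀, q (t, z₀) ≤ v (t, z₀) := by
      have hc : ContinuousAt (fun t : ℝ => (t, z₀)) t₀ := by fun_prop
      exact hc.eventually hqle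
    rcases le_total (a (t₀, z₀)) (b (t₀, z₀)) with hab | hab
    · -- the first function is active
      have hqa : q (t₀, z₀) = a (t₀, z₀) := by rw [hq0]; exact min_eq_left hab
      have hder : deriv (fun t => q (t, z₀)) t₀ = C := by
        have hmax : IsLocalMax (fun t => q (t, z₀) - C * t) t₀ := by
          filter_upwards [ht_ev] with t ht
          have h1 : q (t, z₀) ≤ a (t, z₀) := ht.trans (min_le_left _ _)
          simp only [ha] at h1 hqa
          linarith
        have h1 := hmax.deriv_eq_zero
        have h2 : HasDerivAt (fun t => q (t, z₀) - C * t) (deriv (fun t => q (t, z₀)) t₀ - C * 1) t₀ :=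
          hqt.hasDerivAt.sub ((hasDerivAt_id t₀).const_mul C)
        rw [h2.deriv] at h1
        linarith
      have htest : IsLowerTestAtE uε (fun z => q (t₀, z) + -(ε / 4 + C * t₀)) z₀ := by
        refine ⟨?_, ?_, hqz.add contDiffAt_const⟩
        · simp only [hqa, ha]; ring
        · filter_upwards [hz_ev] with z hz
          have h1 : q (t₀, z) ≤ a (t₀, z) := hz.trans (min_le_left _ _)
          simp only [ha] at h1
          linarith
      have h1 := hu z₀ hz₀ _ htest
      have h2 : complexHessian (fun z => q (t₀, z) + -(ε / 4 + C * t₀)) z₀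
          = complexHessian (fun z => q (t₀, z)) z₀ := by
        funext j k
        simp only [complexHessian, iter_add_const]
      rw [h2] at h1
      refine h1.trans ?_
      simp only [hder]
      rw [EReal.coe_le_coe_iff]
      apply mul_le_mul_of_nonneg_right _ (hg0 z₀ hz₀)
      apply Real.exp_le_exp.mpr
      have h3 : m ≤ q (t₀, z₀) := by
        rw [hqa]
        simp only [ha]
        have := mul_nonneg hC0 ht₀.1.le
        linarith [hm z₀ hz₀c]
      have h4 := hGm t₀ z₀ h3
      simp only at h4
      linarith [hM t₀ ht₀c z₀ hz₀c]
    · -- the second function is active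
      have hqb : q (t₀, z₀) = b (t₀, z₀) := by rw [hq0]; exact min_eq_right hab
      have hLz : K / 2 ≤ Lap W z₀ := by
        by_contra hlt
        push Not at hlt
        have := hA2 (t₀, z₀) ⟨ht₀c, hz₀c, hlt.le⟩
        simp only [hb] at this hab
        linarith
      have hL3 := hA3 (t₀, z₀) ⟨ht₀c, hz₀c, hLz⟩
      simp only at hL3
      have hψs : ContDiff ℝ 2 (fun x => ψ (t₀, x)) := by fun_prop
      have hbs : ContDiffAt ℝ 2 (fun x => ψ (t₀, x) + A * (1 - W x)) z₀ := by
        apply ContDiff.contDiffAt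
        fun_prop
      have hlap : Lap (fun z => q (t₀, z)) z₀ < 0 := by
        have h1 := Lap_le_of_touch (fun z => q (t₀, z)) (fun x => ψ (t₀, x) + A * (1 - W x)) z₀
          hqz hbs hqb (by
            filter_upwards [hz_ev] with z hz
            exact hz.trans (min_le_right _ _))
        rw [Lap_comb _ _ _ _ hψs.contDiffAt hW.contDiffAt] at h1
        linarith
      simp only
      rw [Fop_bot Γ f hΓ _ _ hlap]
      exact bot_le
  · -- initial condition
    intro z hz
    rw [henv (0, z) ⟨⟨le_rfl, hT⟩, hz⟩]
    refine ⟨?_, le_rfl, ?_⟩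
    · refine (min_le_left _ _).trans ?_
      simp only [ha]
      linarith [(hub z hz).2]
    · refine le_min ?_ ?_
      · simp only [ha]
        linarith [(hub z hz).1]
      · have := hA1 z hz
        simp only [hb]
        linarith
  · -- boundary condition
    intro t ht z hz
    have hzc : z ∈ closure Ω := frontier_subset_closure hz
    have htc : t ∈ Set.Icc (0 : ℝ) T := Ico_subset_Icc_self ht
    rw [henv (t, z) ⟨ht, hzc⟩]
    have hbz : b (t, z) = ψ (t, z) := by simp [hb, hWfr z hz]
    refine ⟨?_, le_rfl, ?_⟩
    · refine (min_le_right _ _).trans ?_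
      rw [hbz]
      exact (hψφ' t htc z hz).2.le
    · refine le_min ?_ ?_
      · have h1 := hC₁ C hC1 (t, z) ⟨htc, hz⟩
        have h2 := (hub z hzc).1
        rw [hu₀φ z hz] at h2
        simp only [ha] at h1 ⊢
        linarith
      · rw [hbz]
        linarith [(hψφ' t htc z hz).1]
end
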